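/- If C is a permutation class containing only finitely many simple permutations, then the generating function of the set of even permutations in C is algebraic over ℚ[x]. -/

import Mathlib

/-- A permutation of length `n`. -/
abbrev Perm (n : ℕ) := Equiv.Perm (Fin n)

/-- `σ` is contained in `π`: there is a strictly increasing sequence of indices of `π`
on which `π` is order isomorphic to `σ`. -/
def Contains {m n : ℕ} (σ : Perm m) (π : Perm n) : Prop :=
  ∃ f : Fin m → Fin n, StrictMono f ∧ ∀ s t : Fin m, π (f s) < π (f t) ↔ σ s < σ t

/-- A permutation class: a downset in the containment order. -/
def IsPermClass (C : ∀ n, Set (Perm n)) : Prop :=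
  ∀ ⦃m n : ℕ⦄ (σ : Perm m) (π : Perm n), π ∈ C n → Contains σ π → σ ∈ C m

/-- A set of contiguous values. -/
def IsRange {n : ℕ} (I : Finset (Fin n)) : Prop :=
  ∀ ⦃i j l : Fin n⦄, i ∈ I → l ∈ I → i ≤ j → j ≤ l → j ∈ I

/-- An interval of `π`: a set of contiguous indices mapped to a set of contiguous values. -/
def IsPermInterval {n : ℕ} (π : Perm n) (I : Finset (Fin n)) : Prop :=
  IsRange I ∧ IsRange (I.image π)

/-- A permutation is simple if its only intervals have size `0`, `1`, or `n`. -/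
def IsSimple {n : ℕ} (π : Perm n) : Prop :=
  ∀ I : Finset (Fin n), IsPermInterval π I → I.card ≤ 1 ∨ I.card = n

/-- The set of simple permutations belonging to the class `C` is finite. -/
def FinitelyManySimples (C : ∀ n, Set (Perm n)) : Prop :=
  {p : Σ n : ℕ, Perm n | p.2 ∈ C p.1 ∧ IsSimple p.2}.Finite

/-- The generating function `∑_{n ≥ 1} |S_n| xⁿ` of a set of permutations. -/
noncomputable def genFun (S : ∀ n, Set (Perm n)) : PowerSeries ℚ :=
  PowerSeries.mk fun n => if n = 0 then 0 else (Nat.card (S n) : ℚ)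

/-- A power series `f` is algebraic over `ℚ[x]` if there is a nonzero polynomial
`P(x,y) ∈ ℚ[x][y]` with `P(x,f) = 0`. -/
def IsAlgebraicOverQx (f : PowerSeries ℚ) : Prop :=
  ∃ P : Polynomial (Polynomial ℚ), P ≠ 0 ∧
    Polynomial.eval₂ Polynomial.coeToPowerSeries.ringHom f P = 0

/-!
Every permutation of length at least two is an inflation of a unique simple permutation, and its
blocks are unique as well, provided that over a simple quotient of length two the first block is
not itself such an inflation. A class with finitely many simple permutations is well-quasi-ordered,
so the inflations of its simple members by its members that fall outside the class are recognized
by finitely many forbidden patterns. Which parts of a forbidden pattern are contained in an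
inflation depends only on which parts are contained in each block, and likewise the sign and the
parity of the length of an inflation depend only on the signs and length parities of the blocks.
Sorting the members of the class by these finitely many types, the simple decomposition turns into
a finite system `f t = a t * x + ∑ q, ∏ i, f (q i)` of polynomial equations between the generating
functions of the types, in which every product has at least two factors. All `f t` have constant
term zero, so the Jacobian matrix of the system is the identity at the origin. Hence every
derivation over `ℚ(x)` of the field generated by the `f t` vanishes, so they are algebraic.
-/

/-! ### Strictly monovarying families -/

section StrictMonovary

variable {ι κ α β γ : Type*}

/-- The strict analogue of `Monovary`: `f` strictly increases whenever `g` does. Both the position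
and the value half of a containment or a quotient of permutations are conditions of this kind. -/
def StrictMonovary [LT α] [LT β] (f : ι → α) (g : ι → β) : Prop :=
  ∀ ⦃i j⦄, g i < g j → f i < f j

namespace StrictMonovary

theorem refl [LT α] (f : ι → α) : StrictMonovary f f := fun _ _ h => h

theorem trans [LT α] [LT β] [LT γ] {f : ι → α} {g : ι → β} {h : ι → γ}
    (hfg : StrictMonovary f g) (hgh : StrictMonovary g h) : StrictMonovary f h :=
  fun _ _ hij => hfg (hgh hij)

theorem comp_right [LT α] [LT β] {f : ι → α} {g : ι → β} (h : StrictMonovary f g) (e : κ → ι) :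
    StrictMonovary (f ∘ e) (g ∘ e) :=
  fun _ _ hij => h hij

theorem le_of_le [Preorder α] [LinearOrder β] {f : ι → α} {g : ι → β} (h : StrictMonovary f g)
    {i j : ι} (hij : f i ≤ f j) : g i ≤ g j :=
  not_lt.1 fun hji => (h hji).not_ge hij

theorem lt_iff_lt_of_ne [Preorder α] [LinearOrder β] {f : ι → α} {g : ι → β}
    (h : StrictMonovary f g) {i j : ι} (hne : g i ≠ g j) : f i < f j ↔ g i < g j :=
  ⟨fun hij => (h.le_of_le hij.le).lt_of_ne hne, fun hij => h hij⟩

theorem lt_iff_lt [Preorder α] [LinearOrder β] {f : ι → α} {g : ι → β} (h : StrictMonovary f g)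
    (hg : Function.Injective g) {i j : ι} : f i < f j ↔ g i < g j := by
  rcases eq_or_ne i j with rfl | hne
  · simp only [lt_irrefl]
  · exact h.lt_iff_lt_of_ne (hg.ne hne)

theorem monovary [Preorder α] [LinearOrder β] [Preorder γ] {f : ι → α} {g : ι → β} {h : ι → γ}
    (hfg : StrictMonovary f g) (hfh : StrictMonovary f h) : Monovary g h :=
  fun _ _ hij => hfg.le_of_le (hfh hij).le

theorem of_monovary [PartialOrder α] [Preorder β] {f : ι → α} {g : ι → β}
    (h : Monovary f g) (hfg : ∀ i j, f i = f j → g i = g j) : StrictMonovary f g :=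
  fun i j hij => (h hij).lt_of_ne fun hf => hij.ne (hfg i j hf)

end StrictMonovary

theorem exists_increasing_enumeration {X A : Type*} [Finite X] [LinearOrder A] {q : X → A}
    (hq : Function.Injective q) : ∃ e : Fin (Nat.card X) ≃ X, StrictMono (q ∘ e) := by
  let _ := Fintype.ofFinite X
  let _ := LinearOrder.lift' q hq
  let e := monoEquivOfFin X (k := Nat.card X) Nat.card_eq_fintype_card.symm
  exact ⟨e.toEquiv, fun a b hab => e.strictMono hab⟩

theorem exists_perm_strictMonovary {X A B : Type*} [Finite X] [LinearOrder A] [LinearOrder B]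
    {p : X → A} {v : X → B} (hp : Function.Injective p) (hv : Function.Injective v) :
    ∃ (π : Perm (Nat.card X)) (e : Fin (Nat.card X) ≃ X),
      StrictMono (p ∘ e) ∧ StrictMonovary (v ∘ e) π := by
  obtain ⟨e, he⟩ := exists_increasing_enumeration hp
  obtain ⟨e', he'⟩ := exists_increasing_enumeration hv
  exact ⟨e.trans e'.symm, e, he, fun a b hab => by simpa using he' hab⟩

end StrictMonovary

/-! ### Containment and patterns -/

/-- Permutations of arbitrary length, with the length as first component. -/
abbrev SizedPerm := Σ n : ℕ, Perm n

/-- The pattern formed by the entries of `δ` at the indices in `I` is contained in `π`. -/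
def EmbedsOn {k n : ℕ} (δ : Perm k) (I : Set (Fin k)) (π : Perm n) : Prop :=
  ∃ g : I → Fin n, StrictMono g ∧ StrictMonovary (π ∘ g) (δ ∘ Subtype.val)

/-- The pattern formed by the entries of `π` at the indices in `I` is `ρ`. -/
def IsPatternOn {k n : ℕ} (ρ : Perm k) (π : Perm n) (I : Set (Fin n)) : Prop :=
  ∃ f : Fin k → Fin n, StrictMono f ∧ StrictMonovary (π ∘ f) ρ ∧ Set.range f = I

section Containment

variable {k m n : ℕ} {δ : Perm k} {σ : Perm m} {π : Perm n}

theorem contains_iff_exists_strictMonovary :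
    Contains σ π ↔ ∃ f : Fin m → Fin n, StrictMono f ∧ StrictMonovary (π ∘ f) σ :=
  exists_congr fun _ => and_congr_right fun _ =>
    ⟨fun h s t => (h s t).2, fun h _ _ => h.lt_iff_lt σ.injective⟩

theorem contains_iff_embedsOn_univ : Contains σ π ↔ EmbedsOn σ Set.univ π := by
  rw [contains_iff_exists_strictMonovary]
  constructor
  · rintro ⟨f, hf, hv⟩
    exact ⟨fun s => f s, fun _ _ hst => hf hst, fun _ _ hst => hv hst⟩
  · rintro ⟨g, hg, hv⟩
    exact ⟨fun s => g ⟨s, trivial⟩, fun _ _ hst => hg hst, fun _ _ hst => hv hst⟩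

theorem Contains.refl (π : Perm n) : Contains π π :=
  ⟨id, strictMono_id, fun _ _ => Iff.rfl⟩

theorem EmbedsOn.trans_contains {I : Set (Fin k)} (h : EmbedsOn δ I σ) (h' : Contains σ π) :
    EmbedsOn δ I π := by
  obtain ⟨g, hg, hv⟩ := h
  obtain ⟨f, hf, hv'⟩ := contains_iff_exists_strictMonovary.1 h'
  exact ⟨f ∘ g, hf.comp hg, (hv'.comp_right g).trans hv⟩

theorem Contains.trans (h : Contains δ σ) (h' : Contains σ π) : Contains δ π :=
  contains_iff_embedsOn_univ.2 ((contains_iff_embedsOn_univ.1 h).trans_contains h')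

theorem Contains.size_le (h : Contains σ π) : m ≤ n := by
  obtain ⟨f, hf, -⟩ := h
  simpa using Fintype.card_le_of_injective f hf.injective

theorem StrictMonovary.perm_eq {σ π : Perm n} (h : StrictMonovary π σ) : σ = π := by
  have hmono : StrictMono (π ∘ σ.symm) := fun a b hab => h (by simpa using hab)
  ext s
  simpa using congrArg Fin.val (congrFun hmono.eq_id (σ s)).symm

theorem Contains.eq_of_size_le (h : Contains σ π) (hmn : n ≤ m) :
    (⟨m, σ⟩ : SizedPerm) = ⟨n, π⟩ := by
  obtain rfl : m = n := h.size_le.antisymm hmn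
  obtain ⟨f, hf, hv⟩ := contains_iff_exists_strictMonovary.1 h
  obtain rfl := hf.eq_id
  rw [StrictMonovary.perm_eq hv]

theorem exists_isPatternOn (π : Perm n) (I : Set (Fin n)) :
    ∃ ρ : SizedPerm, IsPatternOn ρ.2 π I := by
  obtain ⟨ρ, e, hp, hv⟩ := exists_perm_strictMonovary (X := I) Subtype.val_injective
    (π.injective.comp Subtype.val_injective)
  refine ⟨⟨_, ρ⟩, fun a => e a, hp, hv, ?_⟩
  exact (e.surjective.range_comp Subtype.val).trans Subtype.range_val

namespace IsPatternOn

variable {ρ : Perm m} {I : Set (Fin n)}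

theorem ncard_eq (h : IsPatternOn ρ π I) : I.ncard = m := by
  obtain ⟨f, hf, -, rfl⟩ := h
  rw [← Set.image_univ, Set.ncard_image_of_injective _ hf.injective, Set.ncard_univ,
    Nat.card_fin]

theorem embedsOn_iff (h : IsPatternOn ρ π I) {J : Set (Fin k)} :
    EmbedsOn δ J ρ ↔ ∃ g : J → Fin n,
      StrictMono g ∧ StrictMonovary (π ∘ g) (δ ∘ Subtype.val) ∧ ∀ s, g s ∈ I := by
  obtain ⟨f, hf, hv, rfl⟩ := h
  constructor
  · rintro ⟨g, hg, hgv⟩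
    exact ⟨f ∘ g, hf.comp hg, (hv.comp_right g).trans hgv, fun s => ⟨g s, rfl⟩⟩
  · rintro ⟨g, hg, hgv, hI⟩
    choose b hb using hI
    obtain rfl : f ∘ b = g := funext hb
    exact ⟨b, fun s t hst => hf.lt_iff_lt.1 (hg hst),
      fun s t hst => (hv.lt_iff_lt ρ.injective).1 (hgv hst)⟩

theorem contains (h : IsPatternOn ρ π I) : Contains ρ π := by
  obtain ⟨f, hf, hv, -⟩ := h
  exact contains_iff_exists_strictMonovary.2 ⟨f, hf, hv⟩

theorem contains_of_isPatternOn {ρ' : Perm k} (h : IsPatternOn ρ π I) (h' : IsPatternOn ρ' π I) :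
    Contains ρ ρ' := by
  rw [contains_iff_embedsOn_univ, h'.embedsOn_iff]
  obtain ⟨g, hg⟩ := h.embedsOn_iff.1 (contains_iff_embedsOn_univ.1 (Contains.refl ρ))
  exact ⟨g, hg⟩

theorem unique {ρ ρ' : SizedPerm} (h : IsPatternOn ρ.2 π I) (h' : IsPatternOn ρ'.2 π I) :
    ρ = ρ' :=
  (h.contains_of_isPatternOn h').eq_of_size_le (h'.contains_of_isPatternOn h).size_le

end IsPatternOn

end Containment

/-! ### Quotients and inflations -/

/-- `σ` is a quotient of `π`: the map `c` sends the indices of `π` onto those of `σ`, and its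
fibres, the blocks, are intervals of `π` whose relative order is given by `σ`. -/
structure IsQuotient {m n : ℕ} (σ : Perm m) (π : Perm n) (c : Fin n → Fin m) : Prop where
  surjective : Function.Surjective c
  pos : StrictMonovary id c
  val : StrictMonovary π (σ ∘ c)

/-- `π` is the inflation of `σ` by the permutations `α i`, where `c` sends an index of `π` to its
block. -/
structure IsInflation {m n : ℕ} (σ : Perm m) (α : Fin m → SizedPerm) (π : Perm n)
    (c : Fin n → Fin m) : Prop extends IsQuotient σ π c where
  isPatternOn (i : Fin m) : IsPatternOn (α i).2 π (c ⁻¹' {i})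

/-- `π` is the inflation of `σ` by the permutations `α i`. -/
def Inflates {m n : ℕ} (σ : Perm m) (α : Fin m → SizedPerm) (π : Perm n) : Prop :=
  ∃ c, IsInflation σ α π c

namespace IsQuotient

variable {m n : ℕ} {σ : Perm m} {π : Perm n} {c : Fin n → Fin m}

theorem exists_isInflation (h : IsQuotient σ π c) : ∃ α, IsInflation σ α π c := by
  choose α hα using fun i => exists_isPatternOn π (c ⁻¹' {i})
  exact ⟨α, h, hα⟩

theorem contains (h : IsQuotient σ π c) : Contains σ π := by
  obtain ⟨g, hg⟩ := h.surjective.hasRightInverse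
  refine contains_iff_exists_strictMonovary.2
    ⟨g, fun s t hst => h.pos ?_, fun s t hst => h.val ?_⟩
  · rwa [hg, hg]
  · simpa only [Function.comp_apply, hg s, hg t] using hst

end IsQuotient

section Inflates

variable {k m n n' : ℕ} {δ : Perm k} {σ : Perm m} {α α' : Fin m → SizedPerm} {π : Perm n}
  {π' : Perm n'} {c : Fin n → Fin m}

namespace IsInflation

theorem embedsOn (h : IsInflation σ α π c) {I : Set (Fin k)} {b : I → Fin m}
    (hpos : StrictMonovary Subtype.val b) (hval : StrictMonovary (δ ∘ Subtype.val) (σ ∘ b))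
    (hb : ∀ i, EmbedsOn δ (Subtype.val '' (b ⁻¹' {i})) (α i).2) : EmbedsOn δ I π := by
  choose G hG hGv hGc using fun i => (h.isPatternOn i).embedsOn_iff.1 (hb i)
  let g : I → Fin n := fun s => G (b s) ⟨s, s, rfl, rfl⟩
  have hg : ∀ {i} s (hs : b s = i), g s = G i ⟨s, s, hs, rfl⟩ := by
    rintro _ s rfl
    rfl
  have hgc : c ∘ g = b := funext fun s => hGc (b s) _
  refine ⟨g, fun s t hst => ?_, fun s t hst => ?_⟩
  · rcases (hpos.le_of_le hst.le).lt_or_eq with hlt | heq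
    · exact h.pos (by rwa [← hgc] at hlt)
    · rw [hg s heq, hg t rfl]
      exact hG _ hst
  · rcases (hval.le_of_le hst.le).lt_or_eq with hlt | heq
    · exact h.val (by rwa [← hgc] at hlt)
    · rw [Function.comp_apply, Function.comp_apply, hg s (σ.injective heq), hg t rfl]
      exact hGv _ hst

theorem exists_of_embedsOn (h : IsInflation σ α π c) {I : Set (Fin k)} (hI : EmbedsOn δ I π) :
    ∃ b : I → Fin m, StrictMonovary Subtype.val b ∧ StrictMonovary (δ ∘ Subtype.val) (σ ∘ b) ∧
      ∀ i, EmbedsOn δ (Subtype.val '' (b ⁻¹' {i})) (α i).2 := by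
  obtain ⟨g, hg, hgv⟩ := hI
  have hinj : Function.Injective (δ ∘ Subtype.val : I → Fin k) :=
    δ.injective.comp Subtype.val_injective
  refine ⟨c ∘ g, fun s t hst => hg.lt_iff_lt.1 (h.pos hst),
    fun s t hst => (hgv.lt_iff_lt hinj).1 (h.val hst), fun i => ?_⟩
  rw [(h.isPatternOn i).embedsOn_iff]
  have hmem : ∀ s : Subtype.val '' (c ∘ g ⁻¹' {i}), ∃ t : I, t.1 = s ∧ c (g t) = i :=
    fun ⟨_, t, ht, hts⟩ => ⟨t, hts, ht⟩
  choose b hb hbi using hmem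
  refine ⟨g ∘ b, hg.comp fun s t hst => ?_, fun s t hst => hgv ?_, hbi⟩
  · rwa [← Subtype.coe_lt_coe, hb, hb]
  · simpa only [Function.comp_apply, hb] using hst

theorem size_pos (h : IsInflation σ α π c) (i : Fin m) : 0 < (α i).1 := by
  rw [← (h.isPatternOn i).ncard_eq, Set.ncard_pos]
  exact h.surjective i

theorem card_filter_eq (h : IsInflation σ α π c) (i : Fin m) :
    (Finset.univ.filter (c · = i)).card = (α i).1 := by
  rw [← (h.isPatternOn i).ncard_eq, ← Set.ncard_coe_finset]
  congr 1
  ext s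
  simp

end IsInflation

namespace Inflates

theorem embedsOn_of_imp (h : Inflates σ α π) (h' : Inflates σ α' π')
    (hα : ∀ i I, EmbedsOn δ I (α i).2 → EmbedsOn δ I (α' i).2) {I : Set (Fin k)}
    (hI : EmbedsOn δ I π) : EmbedsOn δ I π' := by
  obtain ⟨c, h⟩ := h
  obtain ⟨c', h'⟩ := h'
  obtain ⟨b, hpos, hval, hb⟩ := h.exists_of_embedsOn hI
  exact h'.embedsOn hpos hval fun i => hα i _ (hb i)

theorem contains_of_contains (h : Inflates σ α π) (h' : Inflates σ α' π')
    (hα : ∀ i, Contains (α i).2 (α' i).2) : Contains π π' :=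
  contains_iff_embedsOn_univ.2 <| h.embedsOn_of_imp h' (fun i _ hI => hI.trans_contains (hα i))
    (contains_iff_embedsOn_univ.1 (Contains.refl π))

theorem functional (h : Inflates σ α π) (h' : Inflates σ α π') :
    (⟨n, π⟩ : SizedPerm) = ⟨n', π'⟩ :=
  (h.contains_of_contains h' fun _ => Contains.refl _).eq_of_size_le
    (h'.contains_of_contains h fun _ => Contains.refl _).size_le

theorem block_contains (h : Inflates σ α π) (i : Fin m) : Contains (α i).2 π := by
  obtain ⟨c, h⟩ := h
  exact (h.isPatternOn i).contains

theorem block_size_pos (h : Inflates σ α π) (i : Fin m) : 0 < (α i).1 := by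
  obtain ⟨c, h⟩ := h
  exact h.size_pos i

theorem size_eq (h : Inflates σ α π) : n = ∑ i, (α i).1 := by
  obtain ⟨c, h⟩ := h
  simp_rw [← h.card_filter_eq]
  rw [← Finset.card_eq_sum_card_fiberwise (fun _ _ => Finset.mem_univ _), Finset.card_univ,
    Fintype.card_fin]

theorem block_size_lt (h : Inflates σ α π) (hm : 2 ≤ m) (i : Fin m) : (α i).1 < n := by
  have : Nontrivial (Fin m) := Fin.nontrivial_iff_two_le.2 hm
  obtain ⟨j, hj⟩ := exists_ne i
  rw [h.size_eq]
  exact Finset.single_lt_sum (f := fun i => (α i).1) hj (Finset.mem_univ i) (Finset.mem_univ j)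
    (h.block_size_pos j) fun _ _ _ => Nat.zero_le _

end Inflates

/-- The lexicographic order of the points of an inflation of `σ` by the permutations `ρ i`: first by
the block, then within it. With `σ = 1` and `ρ = 1` it is the order of their positions, and with
the given permutations it is the order of their values. -/
def inflationKey {k : Fin m → ℕ} (σ : Perm m) (ρ : ∀ i, Perm (k i)) (x : Σ i, Fin (k i)) :
    Fin m ×ₗ ℕ :=
  toLex (σ x.1, (ρ x.1 x.2 : ℕ))

section InflationKey

variable {k : Fin m → ℕ} {ρ : ∀ i, Perm (k i)}

theorem inflationKey_injective : Function.Injective (inflationKey σ ρ) := by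
  rintro ⟨i, a⟩ ⟨j, b⟩ hab
  obtain ⟨hi, ha⟩ := Prod.mk.inj (toLex.injective hab)
  obtain rfl : i = j := σ.injective hi
  exact congrArg (Sigma.mk i) ((ρ i).injective (Fin.ext ha))

theorem inflationKey_lt_of_block_lt {x y : Σ i, Fin (k i)} (h : σ x.1 < σ y.1) :
    inflationKey σ ρ x < inflationKey σ ρ y :=
  Prod.Lex.toLex_lt_toLex.2 (Or.inl h)

theorem inflationKey_lt_of_lt {i : Fin m} {a b : Fin (k i)} (h : ρ i a < ρ i b) :
    inflationKey σ ρ ⟨i, a⟩ < inflationKey σ ρ ⟨i, b⟩ :=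
  Prod.Lex.toLex_lt_toLex.2 (Or.inr ⟨rfl, h⟩)

end InflationKey

theorem exists_inflates (σ : Perm m) (hα : ∀ i, 0 < (α i).1) :
    ∃ p : SizedPerm, Inflates σ α p.2 := by
  obtain ⟨π, e, hpos, hval⟩ := exists_perm_strictMonovary
    (inflationKey_injective (σ := 1) (ρ := fun i => (1 : Perm (α i).1)))
    (inflationKey_injective (σ := σ) (ρ := fun i => (α i).2))
  refine ⟨⟨_, π⟩, fun s => (e s).1, ⟨fun i => ?_, fun s t hst => ?_, fun s t hst => ?_⟩,
    fun i => ⟨fun a => e.symm ⟨i, a⟩, fun a b hab => ?_, fun a b hab => ?_, ?_⟩⟩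
  · exact ⟨e.symm ⟨i, ⟨0, hα i⟩⟩, by rw [e.apply_symm_apply]⟩
  · exact hpos.lt_iff_lt.1 (inflationKey_lt_of_block_lt hst)
  · exact (hval.lt_iff_lt π.injective).1 (inflationKey_lt_of_block_lt hst)
  · rw [← hpos.lt_iff_lt]
    simpa only [Function.comp_apply, e.apply_symm_apply] using inflationKey_lt_of_lt hab
  · refine (hval.lt_iff_lt π.injective).1 ?_
    simpa only [Function.comp_apply, e.apply_symm_apply] using inflationKey_lt_of_lt hab
  · refine Set.Subset.antisymm (Set.range_subset_iff.2 fun a => ?_) fun s hs => ?_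
    · simp only [Set.mem_preimage, e.apply_symm_apply, Set.mem_singleton_iff]
    · obtain rfl : (e s).1 = i := hs
      exact ⟨(e s).2, e.symm_apply_apply s⟩

/-! ### The sign of an inflation -/

open Classical in
/-- The sign `-1` if `P` holds, and `1` otherwise: the contribution of a pair of indices to the
sign of a permutation, where `P` says that the pair is an inversion. -/
noncomputable def negOneIf (P : Prop) : ℤˣ := if P then -1 else 1

theorem sign_eq_prod_negOneIf (π : Perm n) :
    Equiv.Perm.sign π = ∏ s, ∏ t, negOneIf (s < t ∧ π t < π s) := by
  rw [Equiv.Perm.sign_eq_prod_prod_Ioi]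
  refine Finset.prod_congr rfl fun s _ => ?_
  rw [← Finset.prod_subset (Finset.subset_univ (Finset.Ioi s))]
  · refine Finset.prod_congr rfl fun t ht => ?_
    rw [Finset.mem_Ioi] at ht
    rcases lt_or_gt_of_ne (π.injective.ne ht.ne) with h | h
    · simp [negOneIf, h, h.not_gt]
    · simp [negOneIf, h, h.not_gt, ht]
  · intro t _ ht
    rw [Finset.mem_Ioi] at ht
    simp [negOneIf, ht]

theorem IsPatternOn.prod_negOneIf {ρ : Perm k} {I : Finset (Fin n)}
    (h : IsPatternOn ρ π (I : Set (Fin n))) :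
    ∏ s ∈ I, ∏ t ∈ I, negOneIf (s < t ∧ π t < π s) = Equiv.Perm.sign ρ := by
  obtain ⟨f, hf, hv, hI⟩ := h
  obtain rfl : Finset.univ.map ⟨f, hf.injective⟩ = I := by
    rw [← Finset.coe_inj, ← hI]
    simp
  have hlt {a b : Fin k} : π (f a) < π (f b) ↔ ρ a < ρ b := hv.lt_iff_lt ρ.injective
  simp only [Finset.prod_map, Function.Embedding.coeFn_mk, hf.lt_iff_lt, hlt,
    sign_eq_prod_negOneIf]

theorem IsQuotient.prod_negOneIf (h : IsQuotient σ π c) {i j : Fin m} (hij : i ≠ j) :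
    ∏ s with c s = i, ∏ t with c t = j, negOneIf (s < t ∧ π t < π s) =
      negOneIf (i < j ∧ σ j < σ i) ^
        ((Finset.univ.filter (c · = j)).card * (Finset.univ.filter (c · = i)).card) := by
  rw [pow_mul, ← Finset.prod_const, ← Finset.prod_const]
  refine Finset.prod_congr rfl fun s hs => Finset.prod_congr rfl fun t ht => ?_
  obtain rfl := (Finset.mem_filter.1 hs).2
  obtain rfl := (Finset.mem_filter.1 ht).2
  have hpos : s < t ↔ c s < c t := h.pos.lt_iff_lt_of_ne hij
  have hval : π t < π s ↔ σ (c t) < σ (c s) :=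
    h.val.lt_iff_lt_of_ne (σ.injective.ne hij.symm)
  rw [hpos, hval]

theorem Inflates.sign_eq (h : Inflates σ α π) :
    Equiv.Perm.sign π = ∏ i, ∏ j, if i = j then Equiv.Perm.sign (α i).2 else
      negOneIf (i < j ∧ σ j < σ i) ^ (((α j).1 % 2) * ((α i).1 % 2)) := by
  obtain ⟨c, h⟩ := h
  rw [sign_eq_prod_negOneIf, ← Finset.prod_fiberwise _ c]
  refine Finset.prod_congr rfl fun i _ => ?_
  simp_rw [← Finset.prod_fiberwise Finset.univ c (fun t => negOneIf (_ < t ∧ _))]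
  rw [Finset.prod_comm]
  refine Finset.prod_congr rfl fun j _ => ?_
  split_ifs with hij
  · subst hij
    refine IsPatternOn.prod_negOneIf ?_
    convert h.isPatternOn i
    ext s
    simp
  · rw [h.prod_negOneIf hij, h.card_filter_eq, h.card_filter_eq, Int.units_pow_eq_pow_mod_two,
      Nat.mul_mod, ← Int.units_pow_eq_pow_mod_two]

end Inflates

/-! ### Simple quotients -/

/-- The set `J` contains every point whose `q`-value lies strictly between those of two points of
`J`. An interval of `π` is a set convex for both positions and values. -/
def IsConvex {Y B : Type*} [LT B] (q : Y → B) (J : Set Y) : Prop :=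
  ∀ i ∈ J, ∀ l ∈ J, ∀ j, q i < q j → q j < q l → j ∈ J

namespace IsConvex

section

variable {X Y Y' B B' : Type*} [Preorder B] [PartialOrder B'] {c : X → Y} {c' : X → Y'}
  {q : Y → B} {q' : Y' → B'}

theorem image_fiber (h : Monovary (q' ∘ c') (q ∘ c)) (hc : Function.Surjective c)
    (hq' : Function.Injective q') (k : Y') : IsConvex q (c '' (c' ⁻¹' {k})) := by
  rintro _ ⟨x, hx, rfl⟩ _ ⟨z, hz, rfl⟩ j hxj hjz
  obtain ⟨y, rfl⟩ := hc j
  have hxy : q' (c' x) ≤ q' (c' y) := h hxj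
  have hyz : q' (c' y) ≤ q' (c' z) := h hjz
  rw [show c' x = k from hx] at hxy
  rw [show c' z = k from hz] at hyz
  exact ⟨y, hq' (hyz.antisymm hxy), rfl⟩

theorem compl_singleton (h : Monovary (q' ∘ c') (q ∘ c)) (hq' : Function.Injective q') {k : Y'}
    (hk : c '' (c' ⁻¹' {k}) = Set.univ) {s : X} (hs : c' s ≠ k) : IsConvex q {c s}ᶜ := by
  rintro i - l - j hij hjl rfl
  obtain ⟨x, hx, rfl⟩ := hk.ge (Set.mem_univ i)
  obtain ⟨z, hz, rfl⟩ := hk.ge (Set.mem_univ l)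
  have hxs : q' (c' x) ≤ q' (c' s) := h hij
  have hsz : q' (c' s) ≤ q' (c' z) := h hjl
  rw [show c' x = k from hx] at hxs
  rw [show c' z = k from hz] at hsz
  exact hs (hq' (hsz.antisymm hxs))

end

theorem strictMonovary_of_collapse {Y B : Type*} [LinearOrder B] {q : Y → B} {J : Set Y}
    (hJ : IsConvex q J) (hq : Function.Injective q) {i₀ : Y} (hi₀ : i₀ ∈ J) {r : Y → Y}
    (hr : ∀ i ∈ J, r i = i₀) (hr' : ∀ i ∉ J, r i = i) : StrictMonovary q (q ∘ r) := by
  intro i k hik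
  by_contra! hki
  rcases hki.eq_or_lt with heq | hlt
  · obtain rfl := hq heq
    exact lt_irrefl _ hik
  rw [Function.comp_apply, Function.comp_apply] at hik
  by_cases hi : i ∈ J
  · rw [hr i hi] at hik
    by_cases hk : k ∈ J
    · exact (hr k hk ▸ hik).false
    · exact hk (hJ _ hi₀ _ hi _ (hr' k hk ▸ hik) hlt)
  · rw [hr' i hi] at hik
    by_cases hk : k ∈ J
    · exact hi (hJ _ hk _ hi₀ _ hlt (hr k hk ▸ hik))
    · exact lt_asymm (hr' k hk ▸ hik) hlt

end IsConvex

theorem isRange_iff_isConvex {n : ℕ} {I : Finset (Fin n)} :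
    IsRange I ↔ IsConvex id (I : Set (Fin n)) := by
  refine ⟨fun h i hi l hl j hij hjl => h hi hl hij.le hjl.le, fun h i j l hi hl hij hjl => ?_⟩
  rcases hij.eq_or_lt with rfl | hij
  · exact hi
  rcases hjl.eq_or_lt with rfl | hjl
  · exact hl
  exact h i hi l hl j hij hjl

theorem isPermInterval_iff_isConvex {n : ℕ} {π : Perm n} {I : Finset (Fin n)} :
    IsPermInterval π I ↔ IsConvex id (I : Set (Fin n)) ∧ IsConvex π (I : Set (Fin n)) := by
  rw [IsPermInterval, isRange_iff_isConvex, isRange_iff_isConvex]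
  refine and_congr_right fun _ => ?_
  rw [Finset.coe_image]
  simp only [IsConvex, Set.forall_mem_image]
  refine forall₂_congr fun i _ => forall₂_congr fun l _ => ?_
  rw [π.surjective.forall]
  simp only [id_eq, π.injective.mem_set_image]

theorem IsSimple.subsingleton_or_eq_univ {n : ℕ} {π : Perm n} (h : IsSimple π) {J : Set (Fin n)}
    (hpos : IsConvex id J) (hval : IsConvex π J) : J.Subsingleton ∨ J = Set.univ := by
  lift J to Finset (Fin n) using J.toFinite
  refine (h J (isPermInterval_iff_isConvex.2 ⟨hpos, hval⟩)).imp (fun hJ => ?_) fun hJ => ?_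
  · exact Finset.card_le_one_iff_subsingleton.1 hJ
  · rw [Finset.coe_eq_univ, ← Finset.card_eq_iff_eq_univ, hJ, Fintype.card_fin]

namespace IsQuotient

variable {m m' n : ℕ} {σ : Perm m} {σ' : Perm m'} {π : Perm n} {c : Fin n → Fin m}
  {c' : Fin n → Fin m'}

theorem monovary_pos (h : IsQuotient σ π c) (h' : IsQuotient σ' π c') : Monovary c' c :=
  h'.pos.monovary h.pos

theorem monovary_val (h : IsQuotient σ π c) (h' : IsQuotient σ' π c') :
    Monovary (σ' ∘ c') (σ ∘ c) :=
  h'.val.monovary h.val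

theorem eq_of_eq_of_isSimple (h : IsQuotient σ π c) (h' : IsQuotient σ' π c') (hσ : IsSimple σ)
    (hm : 3 ≤ m) (hm' : 2 ≤ m') {s t : Fin n} (hst : c' s = c' t) : c s = c t := by
  have hpos : Monovary (id ∘ c') (id ∘ c) := h.monovary_pos h'
  have hval := h.monovary_val h'
  rcases hσ.subsingleton_or_eq_univ
    (IsConvex.image_fiber hpos h.surjective Function.injective_id (c' s))
    (IsConvex.image_fiber hval h.surjective σ'.injective (c' s)) with hJ | hJ
  · exact hJ ⟨s, rfl, rfl⟩ ⟨t, hst.symm, rfl⟩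
  exfalso
  have : Nontrivial (Fin m') := Fin.nontrivial_iff_two_le.2 hm'
  obtain ⟨i, hi⟩ := exists_ne (c' s)
  obtain ⟨s₀, rfl⟩ := h'.surjective i
  rcases hσ.subsingleton_or_eq_univ (IsConvex.compl_singleton hpos Function.injective_id hJ hi)
    (IsConvex.compl_singleton hval σ'.injective hJ hi) with hK | hK
  · have hcard : (({c s₀}ᶜ : Set (Fin m))).ncard ≤ 1 :=
      Set.ncard_le_one_iff_subsingleton.2 hK
    rw [Set.ncard_compl, Set.ncard_singleton, Nat.card_fin] at hcard
    omega
  · exact hK.ge (Set.mem_univ (c s₀)) rfl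

theorem contains_of_eq_imp_eq (h : IsQuotient σ π c) (h' : IsQuotient σ' π c')
    (hc : ∀ s t, c' s = c' t → c s = c t) : Contains σ σ' := by
  have hpos : StrictMonovary c' c := .of_monovary (h.monovary_pos h') hc
  have hval : StrictMonovary (σ' ∘ c') (σ ∘ c) := .of_monovary (h.monovary_val h')
    fun s t hst => congrArg σ (hc s t (σ'.injective hst))
  obtain ⟨g, hg⟩ := h.surjective.hasRightInverse
  refine contains_iff_exists_strictMonovary.2 ⟨c' ∘ g, fun i j hij => hpos ?_,
    fun i j hij => hval ?_⟩
  · rwa [hg, hg]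
  · simpa only [Function.comp_apply, hg i, hg j] using hij

theorem eq_of_eq_imp_eq {σ' : Perm m} {c' : Fin n → Fin m} (h : IsQuotient σ π c)
    (h' : IsQuotient σ' π c') (hc : ∀ s t, c s = c t ↔ c' s = c' t) : c = c' := by
  have hpos : StrictMonovary c' c :=
    .of_monovary (h.monovary_pos h') fun s t hst => (hc s t).2 hst
  obtain ⟨g, hg⟩ := h.surjective.hasRightInverse
  have hmono : StrictMono (c' ∘ g) := fun i j hij => hpos (by rwa [hg, hg])
  funext s
  calc c s = c' (g (c s)) := (congrFun hmono.eq_id (c s)).symm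
    _ = c' s := (hc _ _).1 (hg (c s))

theorem eq_of_common_section {σ' : Perm m} {c' : Fin n → Fin m} (h : IsQuotient σ π c)
    (h' : IsQuotient σ' π c') (hg : ∀ i, ∃ s, c s = i ∧ c' s = i) : σ = σ' := by
  choose g hg hg' using hg
  refine StrictMonovary.perm_eq (StrictMonovary.of_monovary (fun i j hij => ?_)
    fun i j hij => congrArg σ (σ'.injective hij))
  simpa only [Function.comp_apply, hg', hg] using
    h.monovary_val h' (i := g i) (j := g j) (by simpa only [Function.comp_apply, hg] using hij)

theorem sizedPerm_eq_of_three_le (h : IsQuotient σ π c) (h' : IsQuotient σ' π c')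
    (hσ : IsSimple σ) (hσ' : IsSimple σ') (hm : 3 ≤ m) (hm' : 2 ≤ m') :
    (⟨m, σ⟩ : SizedPerm) = ⟨m', σ'⟩ := by
  have hle : Contains σ σ' :=
    h.contains_of_eq_imp_eq h' fun s t => h.eq_of_eq_of_isSimple h' hσ hm hm'
  have hge : Contains σ' σ := h'.contains_of_eq_imp_eq h fun s t =>
    h'.eq_of_eq_of_isSimple h hσ' (hm.trans hle.size_le) (by omega)
  exact hle.eq_of_size_le hge.size_le

end IsQuotient

section LengthTwo

variable {n : ℕ} {σ σ' : Perm 2} {π : Perm n} {c c' : Fin n → Fin 2}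

theorem isQuotient_two_iff : IsQuotient σ π c ↔ (∃ s, c s = 0) ∧ (∃ t, c t = 1) ∧
    ∀ s t, c s = 0 → c t = 1 → s < t ∧ (π s < π t ↔ σ 0 < σ 1) := by
  constructor
  · refine fun h => ⟨h.surjective 0, h.surjective 1, fun s t hs ht => ⟨h.pos ?_, ?_⟩⟩
    · simp [hs, ht]
    · rw [h.val.lt_iff_lt_of_ne (by simp [hs, ht])]
      simp [hs, ht]
  · rintro ⟨h₀, h₁, h⟩
    have hpos : StrictMonovary id c := fun s t hst => (h s t (by omega) (by omega)).1
    refine ⟨fun i => ?_, hpos, fun s t hst => ?_⟩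
    · fin_cases i <;> assumption
    rcases lt_trichotomy (c s) (c t) with hc | hc | hc
    · obtain ⟨hs, ht⟩ : c s = 0 ∧ c t = 1 := by omega
      rw [Function.comp_apply, Function.comp_apply, hs, ht] at hst
      exact (h s t hs ht).2.2 hst
    · simp [hc] at hst
    · obtain ⟨hs, ht⟩ : c s = 1 ∧ c t = 0 := by omega
      rw [Function.comp_apply, Function.comp_apply, hs, ht] at hst
      obtain ⟨hts, hiff⟩ := h t s ht hs
      exact (not_lt.1 (hiff.not.2 hst.not_gt)).lt_of_ne (π.injective.ne hts.ne')

theorem IsQuotient.eq_of_length_two (h : IsQuotient σ π c) (h' : IsQuotient σ' π c') : σ = σ' := by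
  obtain ⟨s, hs⟩ := h.surjective 0
  obtain ⟨t, ht⟩ := h.surjective 1
  obtain ⟨s', hs'⟩ := h'.surjective 0
  obtain ⟨t', ht'⟩ := h'.surjective 1
  have le {c : Fin n → Fin 2} (hc : StrictMonovary id c) {s t : Fin n} (hst : s ≤ t) :
      c s ≤ c t := hc.le_of_le hst
  have h₀ : c (min s s') = 0 ∧ c' (min s s') = 0 := by
    have := le h.pos (min_le_left s s')
    have := le h'.pos (min_le_right s s')
    omega
  have h₁ : c (max t t') = 1 ∧ c' (max t t') = 1 := by
    have := le h.pos (le_max_left t t')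
    have := le h'.pos (le_max_right t t')
    omega
  exact h.eq_of_common_section h' (Fin.forall_fin_two.2 ⟨⟨_, h₀⟩, ⟨_, h₁⟩⟩)

end LengthTwo

theorem IsQuotient.simple_unique {n : ℕ} {π : Perm n} {s t : SizedPerm} {c : Fin n → Fin s.1}
    {c' : Fin n → Fin t.1} (h : IsQuotient s.2 π c) (h' : IsQuotient t.2 π c')
    (hs : IsSimple s.2) (ht : IsSimple t.2) (hs2 : 2 ≤ s.1) (ht2 : 2 ≤ t.1) : s = t := by
  rcases hs2.eq_or_lt with hs3 | hs3
  · rcases ht2.eq_or_lt with ht3 | ht3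
    · obtain ⟨_, σ⟩ := s
      obtain ⟨_, σ'⟩ := t
      obtain rfl := hs3
      obtain rfl := ht3
      exact congrArg (Sigma.mk 2) (h.eq_of_length_two h')
    · exact (h'.sizedPerm_eq_of_three_le h ht hs ht3 hs2).symm
  · exact h.sizedPerm_eq_of_three_le h' hs ht hs3 ht2

section Existence

variable {m n : ℕ} {σ : Perm m} {π : Perm n}

theorem IsQuotient.refl (π : Perm n) : IsQuotient π π id :=
  ⟨Function.surjective_id, .refl _, .refl _⟩

theorem IsQuotient.trans {k : ℕ} {ρ : Perm k} {c : Fin n → Fin m} {d : Fin m → Fin k}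
    (h : IsQuotient σ π c) (h' : IsQuotient ρ σ d) : IsQuotient ρ π (d ∘ c) :=
  ⟨h'.surjective.comp h.surjective, h.pos.trans (h'.pos.comp_right c),
    h.val.trans (h'.val.comp_right c)⟩

theorem exists_isQuotient_of_strictMonovary {r : Fin n → Fin n} (hpos : StrictMonovary id r)
    (hval : StrictMonovary π (π ∘ r)) :
    ∃ (q : SizedPerm) (c : Fin n → Fin q.1), q.1 = (Set.range r).ncard ∧ IsQuotient q.2 π c := by
  obtain ⟨q, hq⟩ := exists_isPatternOn π (Set.range r)
  obtain ⟨f, hf, hv, hrange⟩ := id hq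
  choose c hc using fun s => hrange.ge (Set.mem_range_self s)
  refine ⟨q, c, hq.ncard_eq.symm, fun a => ?_, fun s t hst => hpos ?_, fun s t hst => hval ?_⟩
  · obtain ⟨s, hs⟩ := hrange.le (Set.mem_range_self a)
    exact ⟨s, hf.injective ((hc s).trans hs)⟩
  · rw [← hc, ← hc]
    exact hf hst
  · rw [Function.comp_apply, Function.comp_apply, ← hc, ← hc]
    exact hv hst

theorem exists_shorter_isQuotient (hπ : ¬ IsSimple π) :
    ∃ (q : SizedPerm) (c : Fin n → Fin q.1), 2 ≤ q.1 ∧ q.1 < n ∧ IsQuotient q.2 π c := by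
  classical
  simp only [IsSimple, not_forall, not_or, not_le] at hπ
  obtain ⟨I, hI, hcard, hne⟩ := hπ
  obtain ⟨hpos, hval⟩ := isPermInterval_iff_isConvex.1 hI
  obtain ⟨i₀, hi₀, i₁, hi₁, hi⟩ := Finset.one_lt_card.1 hcard
  obtain ⟨j, hj⟩ : ∃ j, j ∉ I := by
    by_contra! hall
    exact hne (by rw [Finset.eq_univ_iff_forall.2 hall, Finset.card_univ, Fintype.card_fin])
  let r : Fin n → Fin n := fun i => if i ∈ I then i₀ else i
  have hrI : ∀ i ∈ I, r i = i₀ := fun i hi => if_pos hi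
  have hrIc : ∀ i ∉ I, r i = i := fun i hi => if_neg hi
  obtain ⟨q, c, hq, hc⟩ := exists_isQuotient_of_strictMonovary (r := r)
    (hpos.strictMonovary_of_collapse Function.injective_id hi₀ hrI hrIc)
    (hval.strictMonovary_of_collapse π.injective hi₀ hrI hrIc)
  refine ⟨q, c, ?_, ?_, hc⟩
  · rw [hq]
    exact (Set.one_lt_ncard_iff).2
      ⟨i₀, j, ⟨i₀, hrI i₀ hi₀⟩, ⟨j, hrIc j hj⟩, fun h => hj (h ▸ hi₀)⟩
  · have hi₁r : i₁ ∉ Set.range r := by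
      rintro ⟨i, hri⟩
      by_cases hiI : i ∈ I
      · exact hi ((hrI i hiI).symm.trans hri)
      · exact hiI (((hrIc i hiI).symm.trans hri).symm ▸ hi₁)
    have hr : Set.range r ≠ Set.univ := fun h => hi₁r (h.ge (Set.mem_univ i₁))
    simpa only [hq, Nat.card_fin] using Set.ncard_lt_card hr

theorem exists_simple_isQuotient (π : Perm n) (hn : 2 ≤ n) :
    ∃ (q : SizedPerm) (c : Fin n → Fin q.1), 2 ≤ q.1 ∧ IsSimple q.2 ∧ IsQuotient q.2 π c := by
  induction n using Nat.strong_induction_on with | _ n ih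
  by_cases hπ : IsSimple π
  · exact ⟨⟨n, π⟩, id, hn, hπ, .refl π⟩
  · obtain ⟨q, c, hq, hqn, hc⟩ := exists_shorter_isQuotient hπ
    obtain ⟨q', d, hq', hsimple, hd⟩ := ih q.1 hqn q.2 hq
    exact ⟨q', d ∘ c, hq', hsimple, hc.trans hd⟩

end Existence

/-! ### The substitution decomposition -/

/-- When `σ` has length `2`, the first of the blocks `α` is not itself an inflation of `σ`. With
this convention the blocks of a permutation with simple quotient `σ` are unique. -/
def Admissible {m : ℕ} (σ : Perm m) (α : Fin m → SizedPerm) : Prop :=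
  ∀ i : Fin m, m = 2 → i.val = 0 → ¬ ∃ c, IsQuotient σ (α i).2 c

section Decomposition

variable {m n : ℕ} {σ : Perm m} {α α' : Fin m → SizedPerm} {π : Perm n} {c c' : Fin n → Fin m}

theorem IsPatternOn.exists_isQuotient {k : ℕ} {ρ : Perm k} {I : Set (Fin n)}
    (h : IsPatternOn ρ π I) (hc : IsQuotient σ π c) (hI : ∀ i, ∃ s ∈ I, c s = i) :
    ∃ d, IsQuotient σ ρ d := by
  obtain ⟨f, hf, hv, rfl⟩ := h
  refine ⟨c ∘ f, fun i => ?_, fun a b hab => ?_, fun a b hab => ?_⟩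
  · obtain ⟨_, ⟨a, rfl⟩, ha⟩ := hI i
    exact ⟨a, ha⟩
  · exact hf.lt_iff_lt.1 (hc.pos hab)
  · exact (hv.lt_iff_lt ρ.injective).1 (hc.val hab)

theorem IsInflation.blocks_unique (h : IsInflation σ α π c) (h' : IsInflation σ α' π c) :
    α = α' :=
  funext fun i => (h.isPatternOn i).unique (h'.isPatternOn i)

section LengthTwo

variable {σ : Perm 2} {α : Fin 2 → SizedPerm} {c c' : Fin n → Fin 2}

theorem IsInflation.eq_zero_of_admissible (h : IsInflation σ α π c) (hα : Admissible σ α)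
    (h' : IsQuotient σ π c') {s : Fin n} (hs : c s = 0) : c' s = 0 := by
  by_contra hs'
  refine hα 0 rfl rfl ((h.isPatternOn 0).exists_isQuotient h' ?_)
  rw [Fin.forall_fin_two]
  constructor
  · obtain ⟨t, ht⟩ := h'.surjective 0
    have hts : t < s := h'.pos (by omega)
    have hct : c t ≤ c s := h.pos.le_of_le hts.le
    exact ⟨t, Set.mem_singleton_iff.2 (by omega), ht⟩
  · exact ⟨s, hs, by omega⟩

theorem IsQuotient.exists_smaller_first_block (hc : IsQuotient σ π c) {k : ℕ} {ρ : Perm k}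
    (hρ : IsPatternOn ρ π (c ⁻¹' {0})) {d : Fin k → Fin 2} (hd : IsQuotient σ ρ d) :
    ∃ c', IsQuotient σ π c' ∧ c' ⁻¹' {0} ⊂ c ⁻¹' {0} := by
  classical
  obtain ⟨f, hf, hv, hrange⟩ := hρ
  obtain ⟨-, -, hclt⟩ := isQuotient_two_iff.1 hc
  obtain ⟨⟨a₀, ha₀⟩, ⟨b₀, hb₀⟩, hdlt⟩ := isQuotient_two_iff.1 hd
  have hcf : ∀ a, c (f a) = 0 := fun a => hrange.le (Set.mem_range_self a)
  let c' : Fin n → Fin 2 := fun s => if s ∈ f '' (d ⁻¹' {0}) then 0 else 1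
  have hc'₀ : ∀ {s}, c' s = 0 ↔ s ∈ f '' (d ⁻¹' {0}) := by simp [c']
  have hc'f : ∀ a, c' (f a) = 0 ↔ d a = 0 := fun a => by
    rw [hc'₀, hf.injective.mem_set_image, Set.mem_preimage, Set.mem_singleton_iff]
  refine ⟨c', isQuotient_two_iff.2 ⟨⟨f a₀, (hc'f a₀).2 ha₀⟩, ⟨f b₀, ?_⟩, ?_⟩, ?_, fun h => ?_⟩
  · have := (hc'f b₀).not.2 (by omega)
    omega
  · intro s t hs ht
    obtain ⟨a, ha, rfl⟩ := hc'₀.1 hs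
    by_cases hct : c t = 0
    · obtain ⟨b, rfl⟩ := hrange.ge hct
      have hb : d b = 1 := by
        have := (hc'f b).not.1 (by omega)
        omega
      rw [hf.lt_iff_lt, show π (f a) < π (f b) ↔ ρ a < ρ b from hv.lt_iff_lt ρ.injective]
      exact hdlt a b ha hb
    · exact hclt _ _ (hcf a) (by omega)
  · intro s hs
    obtain ⟨a, -, rfl⟩ := hc'₀.1 hs
    exact hcf a
  · have := (hc'f b₀).1 (h (hcf b₀))
    omega

end LengthTwo

theorem IsQuotient.exists_admissible_inflates (h : IsQuotient σ π c) :
    ∃ α, Admissible σ α ∧ Inflates σ α π := by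
  by_cases hm : m = 2
  · subst hm
    obtain ⟨d, hd : IsQuotient σ π d, hmin⟩ := Set.exists_min_image
      {d : Fin n → Fin 2 | IsQuotient σ π d} (fun d => (d ⁻¹' {0}).ncard) (Set.toFinite _) ⟨c, h⟩
    obtain ⟨α, hα⟩ := hd.exists_isInflation
    refine ⟨α, ?_, d, hα⟩
    rintro i - hi ⟨e, he⟩
    obtain rfl : i = 0 := Fin.ext hi
    obtain ⟨d', hd', hlt⟩ := hd.exists_smaller_first_block (hα.isPatternOn 0) he
    exact (hmin d' hd').not_gt (Set.ncard_lt_ncard hlt)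
  · obtain ⟨α, hα⟩ := h.exists_isInflation
    exact ⟨α, fun _ hm' => absurd hm' hm, c, hα⟩

theorem exists_simple_inflates (π : Perm n) (hn : 2 ≤ n) :
    ∃ (s : SizedPerm) (α : Fin s.1 → SizedPerm),
      2 ≤ s.1 ∧ IsSimple s.2 ∧ Admissible s.2 α ∧ Inflates s.2 α π := by
  obtain ⟨s, c, hs, hsimple, hc⟩ := exists_simple_isQuotient π hn
  obtain ⟨α, hα, hinfl⟩ := hc.exists_admissible_inflates
  exact ⟨s, α, hs, hsimple, hα, hinfl⟩

namespace Inflates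

theorem simple_unique {s t : SizedPerm} {α : Fin s.1 → SizedPerm} {β : Fin t.1 → SizedPerm}
    (h : Inflates s.2 α π) (h' : Inflates t.2 β π) (hs : IsSimple s.2) (ht : IsSimple t.2)
    (hs2 : 2 ≤ s.1) (ht2 : 2 ≤ t.1) : s = t := by
  obtain ⟨c, h⟩ := h
  obtain ⟨c', h'⟩ := h'
  exact h.toIsQuotient.simple_unique h'.toIsQuotient hs ht hs2 ht2

theorem quotient_contains (h : Inflates σ α π) : Contains σ π := by
  obtain ⟨c, h⟩ := h
  exact h.toIsQuotient.contains

theorem blocks_unique (h : Inflates σ α π) (h' : Inflates σ α' π) (hσ : IsSimple σ) (hm : 2 ≤ m)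
    (hα : Admissible σ α) (hα' : Admissible σ α') : α = α' := by
  obtain ⟨c, h⟩ := h
  obtain ⟨c', h'⟩ := h'
  obtain rfl : c = c' := by
    rcases hm.eq_or_lt with rfl | hm3
    · funext s
      have := h.eq_zero_of_admissible hα h'.toIsQuotient (s := s)
      have := h'.eq_zero_of_admissible hα' h.toIsQuotient (s := s)
      omega
    · exact h.toIsQuotient.eq_of_eq_imp_eq h'.toIsQuotient fun s t =>
        ⟨h'.toIsQuotient.eq_of_eq_of_isSimple h.toIsQuotient hσ hm3 hm,
          h.toIsQuotient.eq_of_eq_of_isSimple h'.toIsQuotient hσ hm3 hm⟩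
  exact h.blocks_unique h'

end Inflates

end Decomposition

/-! ### Algebraic power series -/

section Jacobian

theorem derivation_aeval {R A M T : Type*} [CommRing R] [CommRing A] [Algebra R A]
    [AddCommGroup M] [Module A M] [Module R M] [Fintype T] (D : Derivation R A M) (g : T → A)
    (p : MvPolynomial T R) :
    D (MvPolynomial.aeval g p) =
      ∑ u, MvPolynomial.aeval g (MvPolynomial.pderiv u p) • D (g u) := by
  classical
  induction p using MvPolynomial.induction_on with
  | C a => simp
  | add p q hp hq => simp [hp, hq, add_smul, Finset.sum_add_distrib]
  | mul_X p v hp =>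
    simp [hp, Derivation.leibniz, MvPolynomial.pderiv_X, Pi.single_apply, apply_ite,
      Finset.sum_add_distrib, Finset.smul_sum, add_smul, mul_smul, ite_smul]

theorem eq_zero_of_isUnit_det {A M T : Type*} [CommRing A] [AddCommGroup M] [Module A M]
    [Fintype T] [DecidableEq T] {J : Matrix T T A} (hJ : IsUnit J.det) {x : T → M}
    (h : ∀ t, ∑ u, J t u • x u = 0) (u : T) : x u = 0 := by
  calc x u = ∑ v, (J⁻¹ * J) u v • x v := by
        simp [Matrix.nonsing_inv_mul _ hJ, Matrix.one_apply, ite_smul]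
    _ = ∑ t, J⁻¹ u t • ∑ v, J t v • x v := by
        simp only [Matrix.mul_apply, Finset.sum_smul, Finset.smul_sum, smul_smul]
        exact Finset.sum_comm
    _ = 0 := by simp [h]

theorem derivation_eq_zero_of_adjoin {K L M : Type*} [Field K] [Field L] [Algebra K L]
    {S : Set L} [AddCommGroup M] [Module K M] [Module (IntermediateField.adjoin K S) M]
    (D : Derivation K (IntermediateField.adjoin K S) M)
    (h : ∀ x (hx : x ∈ S), D ⟨x, IntermediateField.subset_adjoin K S hx⟩ = 0) : D = 0 := by
  refine Derivation.ext fun ⟨x, hx⟩ => ?_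
  change D ⟨x, hx⟩ = 0
  induction hx using IntermediateField.adjoin_induction with
  | mem x hx => exact h x hx
  | algebraMap a => exact D.map_algebraMap a
  | add x y hx hy hDx hDy =>
    simpa only [hDx, hDy, add_zero] using! D.map_add ⟨x, hx⟩ ⟨y, hy⟩
  | inv x hx hDx => simpa only [hDx, smul_zero] using! D.leibniz_inv ⟨x, hx⟩
  | mul x y hx hy hDx hDy =>
    simpa only [hDx, hDy, smul_zero, add_zero] using! D.leibniz ⟨x, hx⟩ ⟨y, hy⟩

variable {K L T : Type*} [Field K] [Field L] [Algebra K L]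

theorem isAlgebraic_adjoin_of_D_eq_zero {S : Set L} (hS : S.Finite)
    (h : ∀ x (hx : x ∈ S), KaehlerDifferential.D K (IntermediateField.adjoin K S)
      ⟨x, IntermediateField.subset_adjoin K S hx⟩ = 0) :
    Algebra.IsAlgebraic K (IntermediateField.adjoin K S) := by
  have hD := derivation_eq_zero_of_adjoin _ h
  have : Algebra.EssFiniteType K (IntermediateField.adjoin K S) :=
    IntermediateField.essFiniteType_iff.mpr (IntermediateField.fg_adjoin_of_finite hS)
  have : Algebra.FormallyUnramified K (IntermediateField.adjoin K S) := by
    refine ⟨?_⟩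
    rw [← Submodule.subsingleton_iff (IntermediateField.adjoin K S),
      ← subsingleton_iff_bot_eq_top, ← KaehlerDifferential.span_range_derivation, eq_comm,
      Submodule.span_eq_bot, hD]
    rintro _ ⟨x, rfl⟩
    rfl
  have := Algebra.FormallyUnramified.isSeparable K (IntermediateField.adjoin K S)
  infer_instance

theorem isAlgebraic_of_jacobian_ne_zero [Fintype T] [DecidableEq T] (g : T → L)
    (P : T → MvPolynomial T K) (hP : ∀ t, MvPolynomial.aeval g (P t) = 0)
    (hJ : (Matrix.of fun t u => MvPolynomial.aeval g (MvPolynomial.pderiv u (P t))).det ≠ 0)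
    (t : T) : IsAlgebraic K (g t) := by
  let E := IntermediateField.adjoin K (Set.range g)
  let g' : T → E := fun u => ⟨g u, IntermediateField.subset_adjoin K _ ⟨u, rfl⟩⟩
  have aeval_g' (p : MvPolynomial T K) :
      algebraMap E L (MvPolynomial.aeval g' p) = MvPolynomial.aeval g p :=
    (MvPolynomial.aeval_algebraMap_apply L g' p).symm
  have hP' (t : T) : MvPolynomial.aeval g' (P t) = 0 :=
    (algebraMap E L).injective (by rw [aeval_g', hP, map_zero])
  let J : Matrix T T E := .of fun t u => MvPolynomial.aeval g' (MvPolynomial.pderiv u (P t))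
  have hJ' : J.det ≠ 0 := by
    refine fun h => hJ ?_
    rw [← map_zero (algebraMap E L), ← h, RingHom.map_det]
    congr 1
    ext t u
    exact (aeval_g' _).symm
  have hD : ∀ u, KaehlerDifferential.D K E (g' u) = 0 :=
    eq_zero_of_isUnit_det hJ'.isUnit fun t =>
      (derivation_aeval _ g' (P t)).symm.trans (by rw [hP', map_zero])
  have : Algebra.IsAlgebraic K E := isAlgebraic_adjoin_of_D_eq_zero (Set.finite_range g) <| by
    rintro _ ⟨u, rfl⟩
    exact hD u
  exact (Algebra.IsAlgebraic.isAlgebraic (g' t)).algebraMap (A := L)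

end Jacobian

theorem isAlgebraic_of_jacobian_ne_zero_of_isDomain {A B T : Type*} [CommRing A] [IsDomain A]
    [CommRing B] [IsDomain B] [Algebra A B] [FaithfulSMul A B] [Fintype T] [DecidableEq T]
    (f : T → B) (P : T → MvPolynomial T A) (hP : ∀ t, MvPolynomial.aeval f (P t) = 0)
    (hJ : (Matrix.of fun t u => MvPolynomial.aeval f (MvPolynomial.pderiv u (P t))).det ≠ 0)
    (t : T) : IsAlgebraic A (f t) := by
  let K := FractionRing A
  let L := FractionRing B
  have hBL : Function.Injective (algebraMap B L) := IsFractionRing.injective B L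
  let : Algebra K L := FractionRing.liftAlgebra A L
  have : IsScalarTower A K L := FractionRing.isScalarTower_liftAlgebra A L
  let g : T → L := fun t => algebraMap B L (f t)
  have aeval_g (p : MvPolynomial T A) :
      MvPolynomial.aeval g (MvPolynomial.map (algebraMap A K) p) =
        algebraMap B L (MvPolynomial.aeval f p) := by
    rw [MvPolynomial.aeval_map_algebraMap]
    exact MvPolynomial.aeval_algebraMap_apply L f p
  rw [← isAlgebraic_algebraMap_iff (R := A) (S := B) (A := L) hBL,
    IsFractionRing.isAlgebraic_iff A K L]
  refine isAlgebraic_of_jacobian_ne_zero g (fun t => MvPolynomial.map (algebraMap A K) (P t))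
    (fun t => by rw [aeval_g, hP, map_zero]) ?_ t
  simp only [MvPolynomial.pderiv_map, aeval_g]
  refine fun h => hJ (hBL ?_)
  rw [map_zero, ← h, RingHom.map_det]
  rfl

theorem isAlgebraic_of_eq_aeval {R T : Type*} [CommRing R] [IsDomain R] [Finite T]
    (f : T → PowerSeries R) (Q : T → MvPolynomial T (Polynomial R))
    (hQ : ∀ t, f t = MvPolynomial.aeval f (Q t))
    (hJ : ∀ t u, PowerSeries.constantCoeff
      (MvPolynomial.aeval f (MvPolynomial.pderiv u (Q t))) = 0) (t : T) :
    IsAlgebraic (Polynomial R) (f t) := by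
  classical
  have := Fintype.ofFinite T
  have : FaithfulSMul (Polynomial R) (PowerSeries R) :=
    (faithfulSMul_iff_algebraMap_injective _ _).mpr (Polynomial.coe_injective R)
  refine isAlgebraic_of_jacobian_ne_zero_of_isDomain f (fun t => MvPolynomial.X t - Q t)
    (fun t => by simp [← hQ]) (fun h => ?_) t
  have hdet := congrArg PowerSeries.constantCoeff h
  rw [RingHom.map_det, map_zero] at hdet
  refine one_ne_zero (α := R) ?_
  rw [← hdet, ← Matrix.det_one (n := T)]
  congr 1
  ext t u
  simp [hJ, Matrix.one_apply, MvPolynomial.pderiv_X, Pi.single_apply, apply_ite]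

theorem constantCoeff_aeval_pderiv_prod {ι A R T : Type*} [Fintype ι] [Nontrivial ι]
    [CommRing A] [CommRing R] [Algebra A (PowerSeries R)] {f : T → PowerSeries R}
    (hf : ∀ t, PowerSeries.constantCoeff (f t) = 0) (v : ι → T) (u : T) :
    PowerSeries.constantCoeff (MvPolynomial.aeval f (MvPolynomial.pderiv u
      (∏ i, MvPolynomial.X (R := A) (v i)))) = 0 := by
  classical
  obtain ⟨i, j, hij⟩ := exists_pair_ne ι
  rw [← Finset.mul_prod_erase _ _ (Finset.mem_univ i),
    ← Finset.mul_prod_erase _ _ (Finset.mem_erase.2 ⟨hij.symm, Finset.mem_univ j⟩)]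
  simp [Derivation.leibniz, hf]

theorem isAlgebraicOverQx_iff (f : PowerSeries ℚ) :
    IsAlgebraicOverQx f ↔ IsAlgebraic (Polynomial ℚ) f := by
  have : algebraMap (Polynomial ℚ) (PowerSeries ℚ) = Polynomial.coeToPowerSeries.ringHom := by
    ext <;> simp [PowerSeries.algebraMap_apply']
  simp only [IsAlgebraicOverQx, IsAlgebraic, Polynomial.aeval_def, this]

/-! ### Generating functions of graded types -/

section GradedTypes

variable {X Y T : Type*} {size : X → ℕ}

/-- A grading with finitely many elements of each size. -/
def FinitelyGraded (size : X → ℕ) : Prop :=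
  ∀ n, Finite {x // size x = n}

/-- The generating function of a type `X` graded by `size`. An infinite number of elements of some
size counts as `0`. -/
noncomputable def sizeGenFun (size : X → ℕ) : PowerSeries ℚ :=
  PowerSeries.mk fun n => (Nat.card {x // size x = n} : ℚ)

theorem FinitelyGraded.comp_injective (h : FinitelyGraded size) {e : Y → X}
    (he : Function.Injective e) : FinitelyGraded (size ∘ e) := fun n => by
  have := h n
  exact Finite.of_injective (fun y : {y // size (e y) = n} => (⟨e y, y.2⟩ : {x // size x = n}))
    fun y z hyz => Subtype.ext (he (congrArg Subtype.val hyz))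

theorem FinitelyGraded.sigma {ι : Type*} [Finite ι] {X : ι → Type*} {size : ∀ i, X i → ℕ}
    (h : ∀ i, FinitelyGraded (size i)) :
    FinitelyGraded fun x : Σ i, X i => size x.1 x.2 := fun n => by
  have (i : ι) := h i n
  exact Finite.of_injective
    (fun x => (⟨x.1.1, x.1.2, x.2⟩ : Σ i, {x // size i x = n}))
    fun x y hxy => Subtype.ext (congrArg (fun z : Σ i, {x // size i x = n} =>
      (⟨z.1, z.2.1⟩ : Σ i, X i)) hxy)

theorem FinitelyGraded.pi {ι : Type*} [Fintype ι] {X : ι → Type*} {size : ∀ i, X i → ℕ}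
    (h : ∀ i, FinitelyGraded (size i)) :
    FinitelyGraded fun x : ∀ i, X i => ∑ i, size i (x i) := fun n => by
  have (i : ι) (k : ℕ) := h i k
  have hle (x : {x : ∀ i, X i // ∑ i, size i (x i) = n}) (i : ι) : size i (x.1 i) < n + 1 :=
    Nat.lt_succ_of_le ((Finset.single_le_sum (f := fun i => size i (x.1 i))
      (fun _ _ => Nat.zero_le _) (Finset.mem_univ i)).trans_eq x.2)
  refine Finite.of_injective (β := ∀ i, Σ k : Fin (n + 1), {y : X i // size i y = k})
    (fun x i => ⟨⟨size i (x.1 i), hle x i⟩, x.1 i, rfl⟩) fun x y hxy => ?_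
  ext i
  exact congrArg (fun z : Σ k : Fin (n + 1), {y : X i // size i y = k} => z.2.1) (congrFun hxy i)

theorem sizeGenFun_congr {size' : Y → ℕ} {e : X → Y} (he : Function.Bijective e)
    (h : ∀ x, size' (e x) = size x) : sizeGenFun size = sizeGenFun size' := by
  ext n
  simp only [sizeGenFun, PowerSeries.coeff_mk]
  exact congrArg _ (Nat.card_congr
    ((Equiv.ofBijective e he).subtypeEquiv fun x => by rw [Equiv.ofBijective_apply, h]))

theorem sizeGenFun_sigma {ι : Type*} [Fintype ι] {X : ι → Type*} {size : ∀ i, X i → ℕ}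
    (h : ∀ i, FinitelyGraded (size i)) :
    sizeGenFun (fun x : Σ i, X i => size x.1 x.2) = ∑ i, sizeGenFun (size i) := by
  ext n
  have (i : ι) := h i n
  simp only [sizeGenFun, PowerSeries.coeff_mk, map_sum]
  rw [← Nat.cast_sum, ← Nat.card_sigma]
  exact congrArg _ (Nat.card_congr ⟨fun x => ⟨x.1.1, x.1.2, x.2⟩,
    fun x => ⟨⟨x.1, x.2.1⟩, x.2.2⟩, fun _ => rfl, fun _ => rfl⟩)

theorem sizeGenFun_preimage (h : FinitelyGraded size) (τ : X → T) (U : Set T) [Fintype U] :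
    sizeGenFun (fun x : τ ⁻¹' U => size x) =
      ∑ t : U, sizeGenFun fun x : {x // τ x = t} => size x := by
  rw [← sizeGenFun_sigma (size := fun (t : U) (x : {x // τ x = t}) => size x)
    fun t => h.comp_injective Subtype.val_injective]
  exact sizeGenFun_congr (Equiv.sigmaSubtypeFiberEquivSubtype τ fun _ => Iff.rfl).symm.bijective
    fun _ => rfl

theorem sizeGenFun_pi {ι : Type*} [Fintype ι] {X : ι → Type*} {size : ∀ i, X i → ℕ}
    (h : ∀ i, FinitelyGraded (size i)) :
    sizeGenFun (fun x : ∀ i, X i => ∑ i, size i (x i)) = ∏ i, sizeGenFun (size i) := by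
  classical
  ext n
  have := FinitelyGraded.pi h n
  have (i : ι) (k : ℕ) := h i k
  let sizes (x : {x : ∀ i, X i // ∑ i, size i (x i) = n}) :
      Finset.finsuppAntidiag (Finset.univ : Finset ι) n :=
    ⟨Finsupp.equivFunOnFinite.symm fun i => size i (x.1 i), by simp [x.2]⟩
  have card_fiber (l : Finset.finsuppAntidiag (Finset.univ : Finset ι) n) :
      Nat.card {x // sizes x = l} = ∏ i, Nat.card {y // size i y = l.1 i} := by
    rw [← Nat.card_pi]
    have hl : ∑ i, l.1 i = n := (Finset.mem_finsuppAntidiag.mp l.2).1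
    refine Nat.card_congr ⟨fun x i => ⟨x.1.1 i, DFunLike.congr_fun (congrArg (·.1) x.2) i⟩,
      fun y => ⟨⟨fun i => y i, ?_⟩, ?_⟩, fun _ => rfl, fun _ => rfl⟩
    · exact (Finset.sum_congr rfl fun i _ => (y i).2).trans hl
    · exact Subtype.ext (Finsupp.ext fun i => (y i).2)
  simp only [PowerSeries.coeff_prod, sizeGenFun, PowerSeries.coeff_mk]
  rw [← Nat.card_congr (Equiv.sigmaFiberEquiv sizes), Nat.card_sigma]
  simp only [card_fiber, Nat.cast_sum, Nat.cast_prod]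
  exact (Finset.sum_coe_sort _ fun l : ι →₀ ℕ => ∏ i, (Nat.card {y // size i y = l i} : ℚ))

theorem sizeGenFun_eq_add_of_pos (h : ∀ x, 0 < size x) :
    sizeGenFun size = algebraMap (Polynomial ℚ) (PowerSeries ℚ)
      (Polynomial.C (Nat.card {x // size x = 1} : ℚ) * Polynomial.X) +
      sizeGenFun fun x : {x // 2 ≤ size x} => size x := by
  ext n
  rw [map_add, PowerSeries.algebraMap_apply', Algebra.algebraMap_self, PowerSeries.map_id, id,
    Polynomial.coeff_coe, Polynomial.coeff_C_mul_X]
  simp only [sizeGenFun, PowerSeries.coeff_mk]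
  rcases lt_or_ge n 2 with hn | hn
  · have : IsEmpty {x : {x // 2 ≤ size x} // size x = n} := ⟨fun x => by have := x.1.2; lia⟩
    rw [Nat.card_of_isEmpty (α := {x : {x // 2 ≤ size x} // size x = n}), Nat.cast_zero, add_zero]
    split_ifs with h1
    · rw [h1]
    · have : IsEmpty {x // size x = n} := ⟨fun x => by have := h x.1; have := x.2; lia⟩
      rw [Nat.card_of_isEmpty, Nat.cast_zero]
  · rw [if_neg (by lia), zero_add]
    exact congrArg _ (Nat.card_congr
      (Equiv.subtypeSubtypeEquivSubtype fun hx => hx ▸ hn).symm)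

end GradedTypes

/-! ### Unique decompositions -/

/-- `R d x` says that `x` is assembled from the parts `d`, a shape of `F` filled with elements of
`X`. This is a unique decomposition if it exists precisely for the elements of size at least two,
if parts and result determine each other, and if sizes are additive. -/
structure IsUniqueDecomposition {X : Type*} (F : PFunctor) [∀ a, Fintype (F.B a)] (size : X → ℕ)
    (R : F X → X → Prop) : Prop where
  finitelyGraded : FinitelyGraded size
  size_pos : ∀ x, 0 < size x
  nontrivial : ∀ a, Nontrivial (F.B a)
  size_eq : ∀ {d x}, R d x → size x = ∑ i, size (d.2 i)
  biUnique : Relator.BiUnique R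
  exists_of_two_le : ∀ {x}, 2 ≤ size x → ∃ d, R d x

/-- The type of the assembled element depends only on the shape and on the types of the parts, and
whether the parts can be assembled at all depends only on these data too. -/
def IsCompatible {X T : Type*} {F : PFunctor} (R : F X → X → Prop) (τ : X → T) : Prop :=
  ∀ ⦃d d' x⦄, R d x → F.map τ d = F.map τ d' → ∃ x', R d' x' ∧ τ x' = τ x

/-- The right-hand sides of the productions `t → q` of the context-free grammar whose nonterminals
are the types of elements. -/
def productions {X T : Type*} {F : PFunctor} (R : F X → X → Prop) (τ : X → T) (t : T) :
    Set (F T) :=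
  {q | ∃ d x, R d x ∧ F.map τ d = q ∧ τ x = t}

/-- The generating function of the elements of type `t`, one unknown of the polynomial system. -/
noncomputable def fiberGenFun {X T : Type*} (size : X → ℕ) (τ : X → T) (t : T) : PowerSeries ℚ :=
  sizeGenFun fun x : {x // τ x = t} => size x

section Decomposition

variable {X T : Type*} {F : PFunctor} [∀ a, Fintype (F.B a)] {size : X → ℕ}

theorem constantCoeff_fiberGenFun (h : ∀ x, 0 < size x) (τ : X → T) (t : T) :
    PowerSeries.constantCoeff (fiberGenFun size τ t) = 0 := by
  have : IsEmpty {x : {x // τ x = t} // size x = 0} := ⟨fun x => (h x.1).ne' x.2⟩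
  rw [← PowerSeries.coeff_zero_eq_constantCoeff_apply, fiberGenFun, sizeGenFun,
    PowerSeries.coeff_mk, Nat.card_of_isEmpty, Nat.cast_zero]

theorem FinitelyGraded.pfunctor_obj [Finite F.A] (h : FinitelyGraded size) :
    FinitelyGraded fun d : F X => ∑ i, size (d.2 i) :=
  FinitelyGraded.sigma (size := fun a (α : F.B a → X) => ∑ i, size (α i)) fun _ =>
    FinitelyGraded.pi fun _ => h

theorem sizeGenFun_pfunctor_obj_fiber (h : FinitelyGraded size) (τ : X → T) (q : F T) :
    sizeGenFun (fun d : {d // F.map τ d = q} => ∑ i, size (d.1.2 i)) =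
      ∏ i, fiberGenFun size τ (q.2 i) := by
  have fill (x : ∀ i, {x // τ x = q.2 i}) : F.map τ ⟨q.1, fun i => x i⟩ = q :=
    congrArg (Sigma.mk q.1) (funext fun i => (x i).2)
  refine Eq.trans (Eq.symm ?_) (sizeGenFun_pi (size := fun i (x : {x // τ x = q.2 i}) => size x)
    fun i => h.comp_injective Subtype.val_injective)
  refine sizeGenFun_congr (e := fun x => ⟨⟨q.1, fun i => x i⟩, fill x⟩) ⟨?_, ?_⟩ fun x => rfl
  · intro x y hxy
    have hval : (⟨q.1, fun i => x i⟩ : Σ a, F.B a → X) = ⟨q.1, fun i => y i⟩ :=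
      congrArg Subtype.val hxy
    exact funext fun i => Subtype.ext (congrFun (sigma_mk_injective hval) i)
  · rintro ⟨d, rfl⟩
    exact ⟨fun i => ⟨d.2 i, rfl⟩, rfl⟩

namespace IsUniqueDecomposition

variable {R : F X → X → Prop} {τ : X → T}

theorem two_le (h : IsUniqueDecomposition F size R) {d : F X} {x : X} (hd : R d x) :
    2 ≤ size x := by
  have := h.nontrivial d.1
  calc 2 ≤ Fintype.card (F.B d.1) := Fintype.one_lt_card
    _ = ∑ i : F.B d.1, 1 := by simp
    _ ≤ ∑ i, size (d.2 i) := Finset.sum_le_sum fun i _ => h.size_pos (d.2 i)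
    _ = size x := (h.size_eq hd).symm

theorem sizeGenFun_two_le (h : IsUniqueDecomposition F size R) (hτ : IsCompatible R τ) (t : T) :
    sizeGenFun (fun x : {x : {x // τ x = t} // 2 ≤ size x} => size x) =
      sizeGenFun fun d : F.map τ ⁻¹' productions R τ t => ∑ i, size (d.1.2 i) := by
  have assemble (d : F.map τ ⁻¹' productions R τ t) : ∃ x, R d x ∧ τ x = t := by
    obtain ⟨d', x', hd', hmap, hx'⟩ := d.2
    obtain ⟨x, hx, hxt⟩ := hτ hd' hmap
    exact ⟨x, hx, hxt.trans hx'⟩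
  choose f hRf hf using assemble
  symm
  refine sizeGenFun_congr (e := fun d => ⟨⟨f d, hf d⟩, h.two_le (hRf d)⟩) ⟨?_, ?_⟩
    fun d => h.size_eq (hRf d)
  · intro d d' hdd'
    have hfd : f d = f d' := congrArg (fun x => x.1.1) hdd'
    exact Subtype.ext (h.biUnique.1 (hRf d) (hfd ▸ hRf d'))
  · rintro ⟨⟨x, hx⟩, hx2⟩
    obtain ⟨d, hd⟩ := h.exists_of_two_le hx2
    refine ⟨⟨d, d, x, hd, rfl, hx⟩, ?_⟩
    exact Subtype.ext (Subtype.ext (h.biUnique.2 (hRf _) hd))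

theorem fiberGenFun_eq [Finite F.A] (h : IsUniqueDecomposition F size R) (hτ : IsCompatible R τ)
    (t : T) [Fintype (productions R τ t)] :
    fiberGenFun size τ t = algebraMap (Polynomial ℚ) (PowerSeries ℚ)
      (Polynomial.C (Nat.card {x : {x // τ x = t} // size x = 1} : ℚ) * Polynomial.X) +
      ∑ q : productions R τ t, ∏ i, fiberGenFun size τ (q.1.2 i) := by
  rw [fiberGenFun, sizeGenFun_eq_add_of_pos fun x : {x // τ x = t} => h.size_pos x,
    h.sizeGenFun_two_le hτ, sizeGenFun_preimage h.finitelyGraded.pfunctor_obj]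
  simp only [sizeGenFun_pfunctor_obj_fiber h.finitelyGraded]

theorem isAlgebraic_fiberGenFun [Finite F.A] [Finite T] (h : IsUniqueDecomposition F size R)
    (hτ : IsCompatible R τ) (t : T) : IsAlgebraic (Polynomial ℚ) (fiberGenFun size τ t) := by
  have : Finite (F T) := inferInstanceAs (Finite (Σ a, F.B a → T))
  have (t : T) : Fintype (productions R τ t) := Fintype.ofFinite _
  refine isAlgebraic_of_eq_aeval (fiberGenFun size τ) (fun t =>
    MvPolynomial.C (Polynomial.C (Nat.card {x : {x // τ x = t} // size x = 1} : ℚ) * Polynomial.X) +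
      ∑ q : productions R τ t, ∏ i, MvPolynomial.X (q.1.2 i)) (fun t => ?_) (fun t u => ?_) t
  · simpa [map_sum, map_prod] using h.fiberGenFun_eq hτ t
  · simp only [map_add, MvPolynomial.pderiv_C, zero_add, map_sum]
    refine Finset.sum_eq_zero fun q _ => ?_
    have := h.nontrivial q.1.1
    exact constantCoeff_aeval_pderiv_prod (constantCoeff_fiberGenFun h.size_pos τ) q.1.2 u

end IsUniqueDecomposition

end Decomposition

/-! ### Well-quasi-order -/

section WellQuasiOrder

variable {α : Type*} {r : α → α → Prop} {s : Set α}

open Set.PartiallyWellOrderedOn in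
theorem partiallyWellOrderedOn_of_isMinBadSeq [IsTrans α r] {rk : α → ℕ} {g : ℕ → α}
    (hg : IsBadSeq r s g) (hmin : ∀ k, IsMinBadSeq r rk s k g) :
    {q ∈ s | ∃ k, rk q < rk (g k) ∧ r q (g k)}.PartiallyWellOrderedOn r := by
  rw [Set.partiallyWellOrderedOn_iff_exists_lt]
  intro h hh
  choose hs φ hrk hr using hh
  obtain ⟨j, hj⟩ : ∃ j, ∀ l, φ j ≤ φ l := by
    simpa using WellFounded.has_min (wellFounded_lt.onFun (f := φ)) Set.univ Set.univ_nonempty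
  -- The smallest index `φ j` is where the minimal bad sequence is continued by `h` instead.
  let g' : ℕ → α := fun k => if k < φ j then g k else h (j + (k - φ j))
  have hg's (k : ℕ) : g' k ∈ s := by
    simp only [g']
    split_ifs
    exacts [hg.1 k, hs _]
  have hg' : ¬ IsBadSeq r s g' := hmin (φ j) g' (fun k hk => (if_pos hk).symm) <| by
    simpa [g'] using hrk j
  obtain ⟨m, n, hmn, hr'⟩ : ∃ m n, m < n ∧ r (g' m) (g' n) := by
    simpa [IsBadSeq, hg's] using hg'
  simp only [g'] at hr'
  split_ifs at hr' with hm hn hn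
  · exact absurd hr' (hg.2 m n hmn)
  · exact absurd (trans_of r hr' (hr _)) (hg.2 m _ (hm.trans_le (hj _)))
  · omega
  · exact ⟨_, _, by omega, hr'⟩

theorem exists_finset_forall_exists_rel (hs : s.PartiallyWellOrderedOn r) :
    ∃ B : Finset α, ↑B ⊆ s ∧ ∀ a ∈ s, ∃ b ∈ B, r b a := by
  by_contra! h
  obtain ⟨f, hfs, hf⟩ := exists_seq_of_forall_finset_exists (· ∈ s) (fun b a => ¬ r b a) h
  obtain ⟨m, n, hmn, hr⟩ := hs.exists_lt hfs
  exact hf m n hmn hr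

end WellQuasiOrder

/-- The containment order on permutations of arbitrary lengths. -/
def SizedPerm.Contained (p q : SizedPerm) : Prop := Contains p.2 q.2

instance : IsPreorder SizedPerm SizedPerm.Contained where
  refl p := Contains.refl p.2
  trans _ _ _ h h' := Contains.trans h h'

/-- The nonempty members of `C`, which are the possible blocks of members of `C`. -/
def nonemptyPerms (C : ∀ n, Set (Perm n)) : Set SizedPerm := {p | p.2 ∈ C p.1 ∧ 0 < p.1}

/-- The simple members of `C` of length at least two, which are the possible simple quotients of
members of `C`. -/
def simplePerms (C : ∀ n, Set (Perm n)) : Set SizedPerm :=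
  {p | p.2 ∈ C p.1 ∧ IsSimple p.2 ∧ 2 ≤ p.1}

/-- The inflations of elements of `S` by elements of `B`. -/
def inflations (S B : Set SizedPerm) : Set SizedPerm :=
  {p | ∃ s ∈ S, ∃ α : Fin s.1 → SizedPerm, (∀ i, α i ∈ B) ∧ Inflates s.2 α p.2}

theorem partiallyWellOrderedOn_inflations {S B : Set SizedPerm} (hS : S.Finite)
    (hB : B.PartiallyWellOrderedOn SizedPerm.Contained) :
    (inflations S B).PartiallyWellOrderedOn SizedPerm.Contained := by
  have inflations_singleton (s : SizedPerm) :
      (inflations {s} B).PartiallyWellOrderedOn SizedPerm.Contained := by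
    rw [Set.partiallyWellOrderedOn_iff_exists_lt]
    intro f hf
    simp only [inflations, Set.mem_singleton_iff, exists_eq_left, Set.mem_ofPred_eq] at hf
    choose α hα hf using hf
    obtain ⟨m, n, hmn, h⟩ := (Set.PartiallyWellOrderedOn.pi fun _ : Fin s.1 => hB).exists_lt
      (f := α) fun n i _ => hα n i
    exact ⟨m, n, hmn, (hf m).contains_of_contains (hf n) h⟩
  refine ((Finset.partiallyWellOrderedOn_bUnion hS.toFinset).2 fun s _ =>
    inflations_singleton s).mono ?_
  rintro p ⟨s, hs, h⟩
  exact Set.mem_biUnion (hS.mem_toFinset.2 hs) ⟨s, rfl, h⟩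

section PermClass

variable {C : ∀ n, Set (Perm n)}

theorem exists_decomposition (hC : IsPermClass C) {p : SizedPerm} (hp : p.2 ∈ C p.1)
    (h2 : 2 ≤ p.1) :
    ∃ s ∈ simplePerms C, ∃ α : Fin s.1 → SizedPerm,
      (∀ i, α i ∈ nonemptyPerms C) ∧ Admissible s.2 α ∧ Inflates s.2 α p.2 := by
  obtain ⟨s, α, hs2, hs, hα, h⟩ := exists_simple_inflates p.2 h2
  exact ⟨s, ⟨hC _ _ hp h.quotient_contains, hs, hs2⟩, α,
    fun i => ⟨hC _ _ hp (h.block_contains i), h.block_size_pos i⟩, hα, h⟩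

theorem contained_of_size_le_one {p q : SizedPerm} (hp : p.1 ≤ 1) (hq : 0 < q.1) :
    SizedPerm.Contained p q := by
  have : Subsingleton (Fin p.1) := Fin.subsingleton_iff_le_one.2 hp
  exact ⟨fun _ => ⟨0, hq⟩, Subsingleton.strictMono _, fun s t => by simp [Subsingleton.elim s t]⟩

open Set.PartiallyWellOrderedOn in
theorem partiallyWellOrderedOn_nonemptyPerms (hC : IsPermClass C) (hfin : (simplePerms C).Finite) :
    (nonemptyPerms C).PartiallyWellOrderedOn SizedPerm.Contained := by
  rw [iff_not_exists_isMinBadSeq fun p => p.1]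
  rintro ⟨g, hg, hmin⟩
  have two_le (k : ℕ) : 2 ≤ (g k).1 := by
    by_contra! hk
    exact hg.2 k (k + 1) k.lt_succ_self
      (contained_of_size_le_one (Nat.le_of_lt_succ hk) (hg.1 (k + 1)).2)
  obtain ⟨m, n, hmn, h⟩ := (partiallyWellOrderedOn_inflations hfin
    (partiallyWellOrderedOn_of_isMinBadSeq hg hmin)).exists_lt (f := g) fun k => by
      obtain ⟨s, hs, α, hα, -, hinfl⟩ := exists_decomposition hC (hg.1 k).1 (two_le k)
      exact ⟨s, hs, α, fun i => ⟨hα i, k, hinfl.block_size_lt hs.2.2 i, hinfl.block_contains i⟩,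
        hinfl⟩
  exact hg.2 m n hmn h

theorem exists_finset_obstructions (hC : IsPermClass C) (hfin : (simplePerms C).Finite) :
    ∃ B : Finset SizedPerm, ∀ p ∈ inflations (simplePerms C) (nonemptyPerms C),
      (p.2 ∈ C p.1 ↔ ∀ b ∈ B, ¬ Contains b.2 p.2) := by
  have hPWO : {p ∈ inflations (simplePerms C) (nonemptyPerms C) |
      p.2 ∉ C p.1}.PartiallyWellOrderedOn SizedPerm.Contained :=
    (partiallyWellOrderedOn_inflations hfin
      (partiallyWellOrderedOn_nonemptyPerms hC hfin)).mono (Set.sep_subset _ _)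
  obtain ⟨B, hBC, hB⟩ := exists_finset_forall_exists_rel hPWO
  refine ⟨B, fun p hp => ⟨fun hpC b hb hbp => (hBC hb).2 (hC _ _ hpC hbp), fun h => ?_⟩⟩
  by_contra hpC
  obtain ⟨b, hb, hbp⟩ := hB p ⟨hp, hpC⟩
  exact h b hb hbp

end PermClass

/-! ### Query-complete properties -/

/-- A statistic `τ` of permutations is query-complete for `S` if its value on an inflation of an
element of `S` is determined by its values on the blocks. -/
def QueryComplete {T : Type*} (S : Set SizedPerm) (τ : SizedPerm → T) : Prop :=
  ∀ s ∈ S, ∀ ⦃α α' : Fin s.1 → SizedPerm⦄ ⦃p q : SizedPerm⦄, Inflates s.2 α p.2 →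
    Inflates s.2 α' q.2 → (∀ i, τ (α i) = τ (α' i)) → τ p = τ q

namespace QueryComplete

variable {T T' : Type*} {S : Set SizedPerm}

theorem prodMk {τ : SizedPerm → T} {τ' : SizedPerm → T'} (h : QueryComplete S τ)
    (h' : QueryComplete S τ') : QueryComplete S fun p => (τ p, τ' p) :=
  fun s hs _ _ _ _ hp hq hα => Prod.ext
    (h s hs hp hq fun i => congrArg Prod.fst (hα i))
    (h' s hs hp hq fun i => congrArg Prod.snd (hα i))

theorem pi {ι : Type*} {T : ι → Type*} {τ : ∀ i, SizedPerm → T i}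
    (h : ∀ i, QueryComplete S (τ i)) : QueryComplete S fun p i => τ i p :=
  fun s hs _ _ _ _ hp hq hα => funext fun i => h i s hs hp hq fun j => congrFun (hα j) i

end QueryComplete

theorem queryComplete_embedsOn (S : Set SizedPerm) {k : ℕ} (δ : Perm k) :
    QueryComplete S fun p => {I | EmbedsOn δ I p.2} :=
  fun _ _ _ _ _ _ hp hq hα => Set.Subset.antisymm
    (fun _ => hp.embedsOn_of_imp hq fun i => (hα i).le)
    fun _ => hq.embedsOn_of_imp hp fun i => (hα i).ge

theorem queryComplete_sign_parity (S : Set SizedPerm) :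
    QueryComplete S fun p => (Equiv.Perm.sign p.2, (p.1 : ZMod 2)) := by
  intro s _ α α' p q hp hq hα
  have hsign (i : Fin s.1) : Equiv.Perm.sign (α i).2 = Equiv.Perm.sign (α' i).2 :=
    congrArg Prod.fst (hα i)
  have hparity (i : Fin s.1) : ((α i).1 : ZMod 2) = (α' i).1 := congrArg Prod.snd (hα i)
  refine Prod.ext ?_ ?_
  · simp only [hp.sign_eq, hq.sign_eq, hsign, (ZMod.natCast_eq_natCast_iff' _ _ _).1 (hparity _)]
  · simp only [hp.size_eq, hq.size_eq, Nat.cast_sum, hparity]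

/-- The simple members of `C` of which `p` is an inflation. They determine whether `p` is admissible
as a block. -/
def simpleQuotients (C : ∀ n, Set (Perm n)) (p : SizedPerm) : Set (simplePerms C) :=
  {s | ∃ c, IsQuotient s.1.2 p.2 c}

theorem queryComplete_simpleQuotients (C : ∀ n, Set (Perm n)) :
    QueryComplete (simplePerms C) (simpleQuotients C) := by
  intro s hs α α' p q hp hq _
  have simpleQuotients_eq {β : Fin s.1 → SizedPerm} {r : SizedPerm} (hr : Inflates s.2 β r.2) :
      simpleQuotients C r = {⟨s, hs⟩} := by
    obtain ⟨c, hr⟩ := hr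
    refine Set.eq_singleton_iff_unique_mem.2 ⟨⟨c, hr.toIsQuotient⟩, fun t ⟨d, ht⟩ => ?_⟩
    exact Subtype.ext
      (ht.simple_unique hr.toIsQuotient t.2.2.1 hs.2.1 t.2.2.2 hs.2.2)
  rw [simpleQuotients_eq hp, simpleQuotients_eq hq]

section Enumeration

variable {C : ∀ n, Set (Perm n)} {T : Type*}

theorem Admissible.of_simpleQuotients_eq {s : simplePerms C} {α α' : Fin s.1.1 → SizedPerm}
    (hα : Admissible s.1.2 α) (h : ∀ i, simpleQuotients C (α i) = simpleQuotients C (α' i)) :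
    Admissible s.1.2 α' :=
  fun i hm hi hc => hα i hm hi ((h i).ge hc)

/-- The shape of a simple decomposition: a simple member of `C`, with a slot for each of its
entries. -/
def inflationShape (C : ∀ n, Set (Perm n)) : PFunctor := ⟨simplePerms C, fun s => Fin s.1.1⟩

instance (s : (inflationShape C).A) : Fintype ((inflationShape C).B s) :=
  inferInstanceAs (Fintype (Fin s.1.1))

/-- The parts `d` are a simple quotient of `p` and the blocks of `p` over it, normalized so as to
be unique. -/
def IsSimpleDecomposition (C : ∀ n, Set (Perm n)) (d : inflationShape C (nonemptyPerms C))
    (p : nonemptyPerms C) : Prop :=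
  Admissible d.1.1.2 (fun i => (d.2 i).1) ∧ Inflates d.1.1.2 (fun i => (d.2 i).1) p.1.2

theorem finitelyGraded_nonemptyPerms :
    FinitelyGraded fun p : nonemptyPerms C => p.1.1 := by
  have finitelyGraded_sizedPerm : FinitelyGraded fun p : SizedPerm => p.1 := fun n =>
    Set.Finite.to_subtype <| (Set.finite_range (Sigma.mk (β := Perm) n)).subset <| by
      rintro ⟨m, π⟩ rfl
      exact ⟨π, rfl⟩
  exact finitelyGraded_sizedPerm.comp_injective Subtype.val_injective

theorem isUniqueDecomposition_isSimpleDecomposition (hC : IsPermClass C) :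
    IsUniqueDecomposition (inflationShape C) (fun p : nonemptyPerms C => p.1.1)
      (IsSimpleDecomposition C) where
  finitelyGraded := finitelyGraded_nonemptyPerms
  size_pos p := p.2.2
  nontrivial s := Fin.nontrivial_iff_two_le.2 s.2.2.2
  size_eq h := h.2.size_eq
  biUnique := by
    refine ⟨?_, fun _ _ _ h h' => Subtype.ext (h.2.functional h'.2)⟩
    rintro ⟨⟨s, hs⟩, α⟩ ⟨⟨t, ht⟩, β⟩ p ⟨hα, h⟩ ⟨hβ, h'⟩
    obtain rfl : s = t := h.simple_unique h' hs.2.1 ht.2.1 hs.2.2 ht.2.2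
    have hαβ := h.blocks_unique h' hs.2.1 hs.2.2 hα hβ
    exact congrArg (Sigma.mk _) (funext fun i => Subtype.ext (congrFun hαβ i))
  exists_of_two_le {p} h2 := by
    obtain ⟨s, hs, α, hαC, hα, h⟩ := exists_decomposition hC p.2.1 h2
    exact ⟨⟨⟨s, hs⟩, fun i => ⟨α i, hαC i⟩⟩, hα, h⟩

theorem QueryComplete.isCompatible {τ : SizedPerm → T} (hτ : QueryComplete (simplePerms C) τ)
    (hquot : ∀ p q, τ p = τ q → simpleQuotients C p = simpleQuotients C q)
    (hmem : ∀ p ∈ inflations (simplePerms C) (nonemptyPerms C),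
      ∀ q ∈ inflations (simplePerms C) (nonemptyPerms C), τ p = τ q → p.2 ∈ C p.1 → q.2 ∈ C q.1) :
    IsCompatible (IsSimpleDecomposition C) fun p => τ p.1 := by
  rintro ⟨s, α⟩ ⟨s', α'⟩ p ⟨hα, hp⟩ hmap
  obtain ⟨rfl, hτα⟩ := Sigma.mk.inj hmap
  replace hτα (i : Fin s.1.1) : τ (α i).1 = τ (α' i).1 := congrFun (eq_of_heq hτα) i
  obtain ⟨q, hq⟩ := exists_inflates s.1.2 (α := fun i => (α' i).1) fun i => (α' i).2.2
  have hpq : τ p.1 = τ q := hτ s.1 s.2 hp hq hτα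
  have hqC : q.2 ∈ C q.1 := hmem p.1 ⟨s.1, s.2, _, fun i => (α i).2, hp⟩ q
    ⟨s.1, s.2, _, fun i => (α' i).2, hq⟩ hpq p.2.1
  have hq0 : 0 < q.1 := (Nat.zero_le _).trans_lt
    (hq.block_size_lt s.2.2.2 ⟨0, two_pos.trans_le s.2.2.2⟩)
  exact ⟨⟨q, hqC, hq0⟩, ⟨hα.of_simpleQuotients_eq fun i => hquot _ _ (hτα i), hq⟩, hpq.symm⟩

theorem exists_queryComplete_separating (hC : IsPermClass C) (hfin : (simplePerms C).Finite) :
    ∃ (T : Type) (_ : Finite T) (τ : SizedPerm → T), QueryComplete (simplePerms C) τ ∧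
      (∀ p q, τ p = τ q → simpleQuotients C p = simpleQuotients C q) ∧
      ∀ p ∈ inflations (simplePerms C) (nonemptyPerms C),
        ∀ q ∈ inflations (simplePerms C) (nonemptyPerms C), τ p = τ q →
          p.2 ∈ C p.1 → q.2 ∈ C q.1 := by
  have := hfin.to_subtype
  obtain ⟨B, hB⟩ := exists_finset_obstructions hC hfin
  refine ⟨_, inferInstance, _, (queryComplete_simpleQuotients C).prodMk
    (QueryComplete.pi fun b : B => queryComplete_embedsOn _ b.1.2),
    fun p q h => congrArg Prod.fst h, fun p hp q hq h hpC => (hB q hq).2 fun b hb hbq => ?_⟩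
  have hparts : {I | EmbedsOn b.2 I p.2} = {I | EmbedsOn b.2 I q.2} :=
    congrFun (congrArg Prod.snd h) ⟨b, hb⟩
  rw [contains_iff_embedsOn_univ] at hbq
  exact (hB p hp).1 hpC b hb (contains_iff_embedsOn_univ.2 (hparts.ge hbq))

theorem genFun_eq_sizeGenFun (τ : SizedPerm → T) (U : Set T) :
    (genFun fun n => {π | π ∈ C n ∧ τ ⟨n, π⟩ ∈ U}) =
      sizeGenFun fun p : (fun p : nonemptyPerms C => τ p.1) ⁻¹' U => p.1.1.1 := by
  ext n
  simp only [genFun, sizeGenFun, PowerSeries.coeff_mk]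
  split_ifs with hn
  · have : IsEmpty {p : (fun p : nonemptyPerms C => τ p.1) ⁻¹' U // p.1.1.1 = n} :=
      ⟨fun p => p.1.1.2.2.ne' (p.2.trans hn)⟩
    rw [Nat.card_of_isEmpty, Nat.cast_zero]
  · refine congrArg _ (Nat.card_congr (Equiv.ofBijective
      (fun π => ⟨⟨⟨⟨n, π.1⟩, π.2.1, Nat.pos_of_ne_zero hn⟩, π.2.2⟩, rfl⟩) ⟨?_, ?_⟩))
    · intro π π' h
      exact Subtype.ext (sigma_mk_injective (congrArg (fun x => x.1.1.1) h))
    · rintro ⟨⟨⟨⟨m, π⟩, hπC, h0⟩, hπ⟩, rfl⟩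
      exact ⟨⟨π, hπC, hπ⟩, rfl⟩

theorem statement2_general (hC : IsPermClass C) (hfin : FinitelyManySimples C) [Finite T]
    {τ : SizedPerm → T} (hτ : QueryComplete (simplePerms C) τ) (U : Set T) :
    IsAlgebraicOverQx (genFun fun n => {π | π ∈ C n ∧ τ ⟨n, π⟩ ∈ U}) := by
  have hS : (simplePerms C).Finite := hfin.subset fun p hp => ⟨hp.1, hp.2.1⟩
  have : Finite (inflationShape C).A := hS.to_subtype
  obtain ⟨T', _, τ', hτ', hquot, hmem⟩ := exists_queryComplete_separating hC hS
  have hcompat : IsCompatible (IsSimpleDecomposition C) fun p => (τ p.1, τ' p.1) :=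
    (hτ.prodMk hτ').isCompatible (fun p q h => hquot p q (congrArg Prod.snd h))
      fun p hp q hq h => hmem p hp q hq (congrArg Prod.snd h)
  let _ := Fintype.ofFinite (Prod.fst ⁻¹' U : Set (T × T'))
  rw [isAlgebraicOverQx_iff, genFun_eq_sizeGenFun]
  change IsAlgebraic _ (sizeGenFun fun p : (fun p : nonemptyPerms C => (τ p.1, τ' p.1)) ⁻¹'
    (Prod.fst ⁻¹' U) => p.1.1.1)
  rw [sizeGenFun_preimage finitelyGraded_nonemptyPerms]
  exact Subalgebra.sum_mem (Subalgebra.algebraicClosure (Polynomial ℚ) (PowerSeries ℚ))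
    fun t _ => (isUniqueDecomposition_isSimpleDecomposition hC).isAlgebraic_fiberGenFun hcompat t

end Enumeration

/-- If `C` is a permutation class containing only finitely many simple permutations,
then the generating function of the set of even permutations in `C`
is algebraic over `ℚ[x]`. -/
theorem statement2 (C : ∀ n, Set (Perm n)) (hC : IsPermClass C)
    (hfin : FinitelyManySimples C) :
    IsAlgebraicOverQx (genFun fun n => {π : Perm n | π ∈ C n ∧ Equiv.Perm.sign π = 1}) :=
  statement2_general hC hfin (queryComplete_sign_parity _) {t | t.1 = 1}
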